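/- arXiv:1906.03296 — 2 statements merged into one kernel-verified Lean document; each statement's English description precedes it below -/
import Mathlib

section
/- Let Π be a hyperplane of PG(4,q) distinct from Σ∞. Then Π contains exactly one line [T] of the regular spread S, and there is an ℓ∞-Baer pencil 𝒦 of PG(2,q²) with vertex T̄ whose affine points are mapped by the Bruck–Bose map φ bijectively onto the affine points of Π. Conversely, for every ℓ∞-Baer pencil 𝒦 of PG(2,q²) there is a hyperplane Π ≠ Σ∞ of PG(4,q) whose affine points are exactly the φ-images of the affine points of 𝒦. -/
open scoped Classical
open Matrix

noncomputable section

namespace BaerConics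

/-- Points of the projective space `PG(n-1, K)` as projectivization of `Fin n → K`. -/
abbrev PP (K : Type) [Field K] (n : ℕ) : Type := Projectivization K (Fin n → K)

variable {K : Type} [Field K] {m n : ℕ}

/-- The (at most one) projective point determined by a vector:  empty if `v = 0`,
and the singleton `{[v]}` otherwise. -/
def projPt (v : Fin n → K) : Set (PP K n) :=
  {p | ∃ h : v ≠ 0, p = Projectivization.mk K v h}

/-- The set of projective points lying in a linear subspace. -/
def ptsOf (W : Submodule K (Fin n → K)) : Set (PP K n) :=
  {p | p.rep ∈ W}

/-- The projective line through two points (as the set of points of the span). -/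
def lineTh (P Q : PP K n) : Set (PP K n) :=
  ptsOf (Submodule.span K {P.rep, Q.rep})

/-- `X` is a projective flat of projective dimension `d`. -/
def IsFlat (d : ℕ) (X : Set (PP K n)) : Prop :=
  ∃ W : Submodule K (Fin n → K), Module.finrank K W = d + 1 ∧ X = ptsOf W

/-- Image of a set of vectors under the projective map induced by a matrix. -/
def mimg (M : Matrix (Fin m) (Fin n) K) (X : Set (Fin n → K)) : Set (PP K m) :=
  {p | ∃ v ∈ X, p ∈ projPt (M.mulVec v)}

/-- Coordinatewise application of a ring homomorphism to a vector. -/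
def mapVec {L : Type} [Field L] (σ : K →+* L) (v : Fin n → K) : Fin n → L :=
  fun i => σ (v i)

lemma mulVec_inj (M : Matrix (Fin n) (Fin n) K) (hM : IsUnit M.det) :
    Function.Injective M.mulVec := by
  intro a b hab
  have h := congrArg (fun v => M⁻¹.mulVec v) hab
  simpa [Matrix.mulVec_mulVec, Matrix.nonsing_inv_mul M hM] using h

/-- The projective transformation induced by an invertible matrix. -/
def pmap (M : Matrix (Fin n) (Fin n) K) (hM : IsUnit M.det) (p : PP K n) : PP K n :=
  Projectivization.mk K (M.mulVec p.rep) (by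
    intro h
    apply p.rep_nonzero
    have h0 : M.mulVec p.rep = M.mulVec 0 := by simpa [Matrix.mulVec_zero] using h
    exact mulVec_inj M hM h0)

/-- The map induced on projective points by the coordinatewise `q`-power map. -/
def frobPt (q : ℕ) (p : PP K n) : PP K n :=
  Projectivization.mk K (fun i => p.rep i ^ q) (by
    obtain ⟨i, hi⟩ := Function.ne_iff.mp p.rep_nonzero
    intro h
    exact pow_ne_zero q (by simpa using hi) (by simpa using congrFun h i))

/-- The line at infinity `z = 0` of `PG(2, K)`. -/
def linf (K : Type) [Field K] : Set (PP K 3) := {p | p.rep 2 = 0}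

/-- Coordinatewise application of the algebra map to a vector. -/
def algVec (F : Type) {K : Type} [Field F] [Field K] [Algebra F K] {n : ℕ}
    (v : Fin n → F) : Fin n → K := fun i => algebraMap F K (v i)

/-- Vectors representing the points of the standard Baer subline of `ℓ∞`. -/
def sublineVecs (F K : Type) [Field F] [Field K] [Algebra F K] : Set (Fin 3 → K) :=
  {v | ∃ θ : F, v = ![algebraMap F K θ, 1, 0]} ∪ {![1, 0, 0]}

/-- Nonzero vectors representing the points of `ℓ∞`. -/
def linfVecs (K : Type) [Field K] : Set (Fin 3 → K) := {v | v ≠ 0 ∧ v 2 = 0}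

/-- Vectors with all coordinates in (the image of) `F`, representing the canonical
Baer subplane. -/
def subplaneVecs (F K : Type) [Field F] [Field K] [Algebra F K] : Set (Fin 3 → K) :=
  {v | ∃ w : Fin 3 → F, w ≠ 0 ∧ v = algVec F w}

/-- Vectors of the standard conic with parameters in `S`. -/
def conicVecs {K : Type} [Field K] (S : Set K) : Set (Fin 3 → K) :=
  {v | ∃ θ ∈ S, v = ![1, θ, θ ^ 2]} ∪ {![0, 0, 1]}

/-- `b` is a Baer subline of the line `ℓ` of `PG(2,q²)`. -/
def IsBaerSublineOf (F : Type) {K : Type} [Field F] [Field K] [Algebra F K]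
    (b ℓ : Set (PP K 3)) : Prop :=
  ∃ M : Matrix (Fin 3) (Fin 3) K, IsUnit M.det ∧
    ℓ = mimg M (linfVecs K) ∧ b = mimg M (sublineVecs F K)

/-- `B` is a Baer subplane of `PG(2,q²)`. -/
def IsBaerSubplane (F : Type) {K : Type} [Field F] [Field K] [Algebra F K]
    (B : Set (PP K 3)) : Prop :=
  ∃ M : Matrix (Fin 3) (Fin 3) K, IsUnit M.det ∧ B = mimg M (subplaneVecs F K)

/-- `C` is the image under `PGL(3,K)` of the standard conic with parameters in `S`. -/
def IsConicOver {K : Type} [Field K] (S : Set K) (C : Set (PP K 3)) : Prop :=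
  ∃ M : Matrix (Fin 3) (Fin 3) K, IsUnit M.det ∧ C = mimg M (conicVecs S)

/-- An `F_q`-conic of `PG(2,q²)`: a nondegenerate conic of a Baer subplane. -/
def IsFqConic (F : Type) {K : Type} [Field F] [Field K] [Algebra F K]
    (C : Set (PP K 3)) : Prop :=
  IsConicOver (Set.range (algebraMap F K)) C

/-- An `F_{q²}`-conic of `PG(2,q²)`: a nondegenerate conic. -/
def IsFq2Conic {K : Type} [Field K] (C : Set (PP K 3)) : Prop :=
  IsConicOver (Set.univ : Set K) C

/-- `𝒦` is an `ℓ∞`-Baer pencil with vertex `P`. -/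
def IsLinfBaerPencil (F : Type) {K : Type} [Field F] [Field K] [Algebra F K]
    (𝒦 : Set (PP K 3)) (P : PP K 3) : Prop :=
  P ∈ linf K ∧ ∃ ℓ b : Set (PP K 3), IsBaerSublineOf F b ℓ ∧ P ∉ ℓ ∧
    (∃! X, X ∈ b ∩ linf K) ∧ 𝒦 = ⋃ X ∈ b, lineTh P X

/-- `m` is a line of the Baer subplane `B`, with extension (full line) `ℓ`. -/
def IsLineOfExt {K : Type} [Field K] (q : ℕ) (B m ℓ : Set (PP K 3)) : Prop :=
  IsFlat 1 ℓ ∧ m = B ∩ ℓ ∧ m.ncard = q + 1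

/-- `m` is a line of the Baer subplane `B`. -/
def IsLineOf {K : Type} [Field K] (q : ℕ) (B m : Set (PP K 3)) : Prop :=
  ∃ ℓ, IsLineOfExt q B m ℓ

/-- `P` and `Q` are conjugate with respect to the Baer subline `b` of `ℓ∞`. -/
def ConjWrtSubline (F : Type) {K : Type} [Field F] [Field K] [Algebra F K]
    (q : ℕ) (b : Set (PP K 3)) (P Q : PP K 3) : Prop :=
  ∃ (M : Matrix (Fin 3) (Fin 3) K) (hM : IsUnit M.det),
    mimg M (linfVecs K) = linf K ∧ b = mimg M (sublineVecs F K) ∧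
    ∃ P₀ : PP K 3, P = pmap M hM P₀ ∧ Q = pmap M hM (frobPt q P₀)

/-- A representative vector for the point `(δ,1,0)` (resp. `(1,0,0)`) of `ℓ∞`. -/
def ptInfVec {K : Type} [Field K] : Option K → Fin 3 → K
  | some δ => ![δ, 1, 0]
  | none => ![1, 0, 0]

lemma ptInfVec_ne {K : Type} [Field K] (t : Option K) : ptInfVec t ≠ 0 := by
  cases t with
  | none => intro h; have h0 := congrFun h 0; simp [ptInfVec] at h0
  | some δ => intro h; have h0 := congrFun h 1; simp [ptInfVec] at h0

/-- The point of `ℓ∞` with parameter `δ ∈ K ∪ {∞}`. -/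
def ptInf {K : Type} [Field K] (t : Option K) : PP K 3 :=
  Projectivization.mk K (ptInfVec t) (ptInfVec_ne t)

/-- The hyperplane at infinity `z = 0` of `PG(4, F)`. -/
def sinf (F : Type) [Field F] : Set (PP F 5) := {p | p.rep 4 = 0}

/-- Affine coordinates of the Bruck-Bose image of an affine point of `PG(2,q²)`. -/
def bbVec {F K : Type} [Field F] [Field K] (c0 c1 : K → F) (p : PP K 3) : Fin 5 → F :=
  ![c0 (p.rep 0 / p.rep 2), c1 (p.rep 0 / p.rep 2),
    c0 (p.rep 1 / p.rep 2), c1 (p.rep 1 / p.rep 2), 1]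

/-- The Bruck-Bose map (meaningful on affine points of `PG(2,q²)`). -/
def bb {F K : Type} [Field F] [Field K] (c0 c1 : K → F) (p : PP K 3) : PP F 5 :=
  Projectivization.mk F (bbVec c0 c1 p) (by
    intro h
    have h4 := congrFun h 4
    simp [bbVec] at h4)

/-- First spanning vector of the spread line with parameter `δ ∈ K ∪ {∞}`. -/
def spreadV1 {F K : Type} [Field F] [Field K] (c0 c1 : K → F) : Option K → Fin 5 → F
  | some δ => ![c0 δ, c1 δ, 1, 0, 0]
  | none => ![1, 0, 0, 0, 0]

/-- Second spanning vector of the spread line with parameter `δ ∈ K ∪ {∞}`. -/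
def spreadV2 {F K : Type} [Field F] [Field K] (c0 c1 : K → F) (t0 t1 : F) :
    Option K → Fin 5 → F
  | some δ => ![t0 * c1 δ, c0 δ + t1 * c1 δ, 0, 1, 0]
  | none => ![0, 1, 0, 0, 0]

/-- The line of the regular spread `S` with parameter `δ ∈ K ∪ {∞}`. -/
def spreadLine {F K : Type} [Field F] [Field K] (c0 c1 : K → F) (t0 t1 : F)
    (t : Option K) : Set (PP F 5) :=
  ptsOf (Submodule.span F {spreadV1 c0 c1 t, spreadV2 c0 c1 t0 t1 t})

/-- The extension `[T]⋆` of a spread line to `PG(4,q²)`. -/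
def extSpreadLine (F : Type) {K : Type} [Field F] [Field K] [Algebra F K]
    (c0 c1 : K → F) (t0 t1 : F) (t : Option K) : Set (PP K 5) :=
  ptsOf (Submodule.span K
    {algVec F (spreadV1 c0 c1 t), algVec F (spreadV2 c0 c1 t0 t1 t)})

/-- The `K`-extension of an `F`-subspace. -/
def extSub (F : Type) {K : Type} [Field F] [Field K] [Algebra F K] {n : ℕ}
    (W : Submodule F (Fin n → F)) : Submodule K (Fin n → K) :=
  Submodule.span K (algVec F '' (W : Set (Fin n → F)))

def A0v {K : Type} [Field K] (τ : K) (q : ℕ) : Fin 5 → K := ![τ ^ q, -1, 0, 0, 0]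
def A1v {K : Type} [Field K] (τ : K) (q : ℕ) : Fin 5 → K := ![0, 0, τ ^ q, -1, 0]
def B0v {K : Type} [Field K] (τ : K) : Fin 5 → K := ![τ, -1, 0, 0, 0]
def B1v {K : Type} [Field K] (τ : K) : Fin 5 → K := ![0, 0, τ, -1, 0]

/-- The transversal line `g` of the regular spread, in `PG(4,q²)`. -/
def gline {K : Type} [Field K] (τ : K) (q : ℕ) : Set (PP K 5) :=
  ptsOf (Submodule.span K {A0v τ q, A1v τ q})

/-- The conjugate transversal line `g^q` of the regular spread, in `PG(4,q²)`. -/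
def gqline {K : Type} [Field K] (τ : K) : Set (PP K 5) :=
  ptsOf (Submodule.span K {B0v τ, B1v τ})

/-- Representative vector of the point `T = δA₀ + A₁` of `g`. -/
def gptVec {K : Type} [Field K] (τ : K) (q : ℕ) : Option K → Fin 5 → K
  | some δ => δ • A0v τ q + A1v τ q
  | none => A0v τ q

/-- Representative vector of the conjugate point `T^q = δ^q A₀^q + A₁^q` of `g^q`. -/
def gqptVec {K : Type} [Field K] (τ : K) (q : ℕ) : Option K → Fin 5 → K
  | some δ => δ ^ q • B0v τ + B1v τ
  | none => B0v τ

lemma gptVec_ne {K : Type} [Field K] (τ : K) (q : ℕ) (t : Option K) :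
    gptVec τ q t ≠ 0 := by
  cases t with
  | none =>
      intro h
      have := congrFun h 1
      simp [gptVec, A0v] at this
  | some δ =>
      intro h
      have := congrFun h 3
      simp [gptVec, A0v, A1v] at this

lemma gqptVec_ne {K : Type} [Field K] (τ : K) (q : ℕ) (t : Option K) :
    gqptVec τ q t ≠ 0 := by
  cases t with
  | none =>
      intro h
      have := congrFun h 1
      simp [gqptVec, B0v] at this
  | some δ =>
      intro h
      have := congrFun h 3
      simp [gqptVec, B0v, B1v] at this

/-- The point of `g` corresponding to the point of `ℓ∞` with parameter `δ ∈ K ∪ {∞}`. -/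
def gpt {K : Type} [Field K] (τ : K) (q : ℕ) (t : Option K) : PP K 5 :=
  Projectivization.mk K (gptVec τ q t) (gptVec_ne τ q t)

/-- The point of `g^q` conjugate to `gpt τ q t`. -/
def gqpt {K : Type} [Field K] (τ : K) (q : ℕ) (t : Option K) : PP K 5 :=
  Projectivization.mk K (gqptVec τ q t) (gqptVec_ne τ q t)

/-- Evaluation of the quadratic form with matrix `M` at `v`. -/
def qeval {K : Type} [Field K] {n : ℕ} (M : Matrix (Fin n) (Fin n) K) (v : Fin n → K) : K :=
  v ⬝ᵥ M.mulVec v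

/-- Vectors of the standard twisted cubic (inside the hyperplane `x₄ = 0`)
with parameters in `S`. -/
def tcVecs {K : Type} [Field K] (S : Set K) : Set (Fin 5 → K) :=
  {v | ∃ θ ∈ S, v = ![1, θ, θ ^ 2, θ ^ 3, 0]} ∪ {![0, 0, 0, 1, 0]}

/-- Vectors of the standard 4-dimensional normal rational curve with parameters in `S`. -/
def nrcVecs {K : Type} [Field K] (S : Set K) : Set (Fin 5 → K) :=
  {v | ∃ θ ∈ S, v = ![1, θ, θ ^ 2, θ ^ 3, θ ^ 4]} ∪ {![0, 0, 0, 0, 1]}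

/-- `R` is a regulus of `Σ∞` in `PG(4,q)`. -/
def IsRegulus {F : Type} [Field F] (q : ℕ) (R : Set (Set (PP F 5))) : Prop :=
  R.ncard = q + 1 ∧
  (∀ ℓ ∈ R, IsFlat 1 ℓ ∧ ℓ ⊆ sinf F) ∧
  (∀ ℓ ∈ R, ∀ ℓ' ∈ R, ℓ ≠ ℓ' → ℓ ∩ ℓ' = ∅) ∧
  (∀ mℓ : Set (PP F 5), IsFlat 1 mℓ → mℓ ⊆ sinf F →
    (∃ ℓ₁ ∈ R, ∃ ℓ₂ ∈ R, ∃ ℓ₃ ∈ R, ℓ₁ ≠ ℓ₂ ∧ ℓ₁ ≠ ℓ₃ ∧ ℓ₂ ≠ ℓ₃ ∧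
      (mℓ ∩ ℓ₁).Nonempty ∧ (mℓ ∩ ℓ₂).Nonempty ∧ (mℓ ∩ ℓ₃).Nonempty) →
    ∀ ℓ ∈ R, (mℓ ∩ ℓ).Nonempty)

/-!
The `F`-linear map `(x₀, x₁, y₀, y₁, z) ↦ (x₀ + x₁τ, y₀ + y₁τ, z)` from `F⁵` to `K³` is injective
and undoes the Bruck–Bose map on affine points, so the affine points of a hyperplane `Π = PG(W)`
are the images of the affine points of the `F`-linear set of `PG(2,q²)` defined by the image `V`
of `W`. It carries the two-dimensional `F`-space of a spread line `[T]` onto the one-dimensional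
`K`-space of the point `T̄`, so `Π` contains `[T]` exactly when `V` contains the `K`-line `T̄`.

If `Π ≠ Σ∞` then `V` meets `{z = 0}`, a `K`-plane of `F`-dimension four, in an `F`-space `V₀` of
dimension three. It contains a unique `K`-line: `V₀` and `τV₀` have a common nonzero vector, which
gives existence, and two distinct `K`-lines together span four `F`-dimensions, which gives
uniqueness. Finally, `ℓ∞`-Baer pencils with vertex `P` are the linear sets of the `F`-spaces
`⟨u, w⟩ ⊕ P` with `u` at infinity, `u ∉ P` and `w` affine, and `V` is of this form since it is
four-dimensional, contains `T̄`, and meets `{z = 0}` in dimension three.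
-/

section Points

variable {p p' : PP K n} {v : Fin n → K} {W W' : Submodule K (Fin n → K)}

lemma exists_smul_eq_rep_of_mem_projPt (hp : p ∈ projPt v) : ∃ a : K, a ≠ 0 ∧ a • v = p.rep := by
  obtain ⟨hv, rfl⟩ := hp
  obtain ⟨a, ha⟩ := Projectivization.exists_smul_eq_mk_rep K v hv
  exact ⟨a, a.ne_zero, ha⟩

lemma mem_projPt_of_smul_eq_rep {a : K} (ha : a • v = p.rep) : p ∈ projPt v := by
  have hv : v ≠ 0 := by
    rintro rfl
    exact p.rep_nonzero (by rw [← ha, smul_zero])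
  refine ⟨hv, p.mk_rep.symm.trans ?_⟩
  exact (Projectivization.mk_eq_mk_iff' K _ _ _ _).2 ⟨a, ha⟩

lemma mem_projPt_rep (p : PP K n) : p ∈ projPt p.rep :=
  ⟨p.rep_nonzero, p.mk_rep.symm⟩

lemma exists_mem_projPt (hv : v ≠ 0) : ∃ p : PP K n, p ∈ projPt v :=
  ⟨_, hv, rfl⟩

lemma projPt_subsingleton (v : Fin n → K) : (projPt v).Subsingleton := by
  rintro _ ⟨_, rfl⟩ _ ⟨_, rfl⟩
  rfl

lemma projPt_smul {a : K} (ha : a ≠ 0) (v : Fin n → K) : projPt (a • v) = projPt v := by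
  ext p
  constructor <;> intro hp <;> obtain ⟨c, -, hc⟩ := exists_smul_eq_rep_of_mem_projPt hp
  · exact mem_projPt_of_smul_eq_rep (a := c * a) (by rw [mul_smul, hc])
  · exact mem_projPt_of_smul_eq_rep (a := c / a) (by rw [smul_smul, div_mul_cancel₀ c ha, hc])

lemma mem_ptsOf_iff_of_mem_projPt (hp : p ∈ projPt v) : p ∈ ptsOf W ↔ v ∈ W := by
  obtain ⟨a, ha0, ha⟩ := exists_smul_eq_rep_of_mem_projPt hp
  change p.rep ∈ W ↔ v ∈ W
  rw [← ha, W.smul_mem_iff ha0]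

lemma mem_ptsOf_iff : p ∈ ptsOf W ↔ ∃ v ∈ W, p ∈ projPt v :=
  ⟨fun hp => ⟨p.rep, hp, mem_projPt_rep p⟩,
    fun ⟨_, hv, hp⟩ => (mem_ptsOf_iff_of_mem_projPt hp).2 hv⟩

lemma ptsOf_subset_ptsOf_iff : ptsOf W ⊆ ptsOf W' ↔ W ≤ W' := by
  refine ⟨fun h v hv => ?_, fun h p hp => h hp⟩
  rcases eq_or_ne v 0 with rfl | hv0
  · exact W'.zero_mem
  · obtain ⟨p, hp⟩ := exists_mem_projPt hv0
    exact (mem_ptsOf_iff_of_mem_projPt hp).1 (h ((mem_ptsOf_iff_of_mem_projPt hp).2 hv))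

lemma submodule_le_iff_mem_ptsOf : p.submodule ≤ W ↔ p ∈ ptsOf W := by
  rw [p.submodule_eq, Submodule.span_singleton_le_iff_mem]
  rfl

lemma linf_eq_ptsOf : linf K = ptsOf (LinearMap.ker (LinearMap.proj 2)) := rfl

lemma sinf_eq_ptsOf : sinf K = ptsOf (LinearMap.ker (LinearMap.proj 4)) := rfl

lemma mem_linf_iff_of_mem_projPt {p : PP K 3} {v : Fin 3 → K} (hp : p ∈ projPt v) :
    p ∈ linf K ↔ v 2 = 0 := by
  rw [linf_eq_ptsOf, mem_ptsOf_iff_of_mem_projPt hp]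
  rfl

lemma mem_sinf_iff_of_mem_projPt {p : PP K 5} {v : Fin 5 → K} (hp : p ∈ projPt v) :
    p ∈ sinf K ↔ v 4 = 0 := by
  rw [sinf_eq_ptsOf, mem_ptsOf_iff_of_mem_projPt hp]
  rfl

lemma exists_ptInf_eq {P : PP K 3} (hP : P ∈ linf K) : ∃ t, ptInf t = P := by
  suffices h : ∃ t, P ∈ projPt (ptInfVec t) from h.imp fun t ⟨_, ht⟩ => ht.symm
  have hP2 : P.rep 2 = 0 := hP
  by_cases h1 : P.rep 1 = 0
  · refine ⟨none, mem_projPt_of_smul_eq_rep (a := P.rep 0) ?_⟩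
    ext i
    fin_cases i <;> simp [ptInfVec, h1, hP2]
  · refine ⟨some (P.rep 0 / P.rep 1), mem_projPt_of_smul_eq_rep (a := P.rep 1) ?_⟩
    ext i
    fin_cases i <;> simp [ptInfVec, hP2, mul_div_cancel₀ _ h1]

lemma ptInf_injective : Function.Injective (ptInf (K := K)) := by
  intro s t hst
  obtain ⟨a, ha⟩ := (Projectivization.mk_eq_mk_iff' K _ _ _ _).1 hst
  rcases s with - | δ <;> rcases t with - | ε <;>
    simp only [ptInfVec, funext_iff, Fin.forall_fin_succ] at ha <;> simp at ha <;> grind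

lemma ptInf_mem_linf (t : Option K) : ptInf t ∈ linf K := by
  refine (mem_linf_iff_of_mem_projPt ⟨ptInfVec_ne t, rfl⟩).2 ?_
  cases t <;> rfl

end Points

section LinearSets

variable {F : Type} [Field F] [Algebra F K]

/-- The `F`-linear set of `PG(n-1, K)` defined by an `F`-subspace `U` of `Kⁿ`: the points
represented by the nonzero vectors of `U`. Baer sublines, Baer pencils and the preimages of the
subspaces of `PG(4,q)` under the Bruck–Bose map are all described as linear sets. -/
def linearSet (U : Submodule F (Fin n → K)) : Set (PP K n) :=
  {p | ∃ v ∈ U, p ∈ projPt v}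

open scoped Pointwise in
lemma linearSet_smul {k : K} (hk : k ≠ 0) (U : Submodule F (Fin n → K)) :
    linearSet (k • U) = linearSet U := by
  ext p
  constructor
  · rintro ⟨_, ⟨v, hv, rfl⟩, hp⟩
    exact ⟨v, hv, by rwa [← projPt_smul hk]⟩
  · rintro ⟨v, hv, hp⟩
    exact ⟨k • v, Submodule.smul_mem_pointwise_smul v k U hv, by rwa [projPt_smul hk]⟩

lemma biUnion_linearSet_lineTh {U : Submodule F (Fin n → K)} (hU : (linearSet U).Nonempty)
    (P : PP K n) :
    ⋃ X ∈ linearSet U, lineTh P X = linearSet (U ⊔ P.submodule.restrictScalars F) := by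
  ext p
  simp only [Set.mem_iUnion, exists_prop, P.submodule_eq]
  constructor
  · rintro ⟨X, ⟨v, hv, hX⟩, hp⟩
    obtain ⟨a, ha0, ha⟩ := exists_smul_eq_rep_of_mem_projPt hX
    obtain ⟨r, s, hrs⟩ := Submodule.mem_span_pair.1 hp
    rcases eq_or_ne s 0 with rfl | hs
    · refine ⟨P.rep, Submodule.mem_sup_right (Submodule.mem_span_singleton_self _),
        mem_projPt_of_smul_eq_rep (a := r) (by simpa using hrs)⟩
    · refine ⟨v + (r / (s * a)) • P.rep, Submodule.add_mem_sup hv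
        (Submodule.smul_mem _ _ (Submodule.mem_span_singleton_self _)),
        mem_projPt_of_smul_eq_rep (a := s * a) ?_⟩
      rw [← hrs, ← ha, smul_add, smul_smul, smul_smul, mul_div_cancel₀ _ (mul_ne_zero hs ha0),
        add_comm]
  · rintro ⟨_, hv, hp⟩
    obtain ⟨v, hvU, w, hw, rfl⟩ := Submodule.mem_sup.1 hv
    obtain ⟨c, rfl⟩ := Submodule.mem_span_singleton.1 hw
    obtain ⟨X, hXU, hvX⟩ : ∃ X ∈ linearSet U, v ∈ Submodule.span K {P.rep, X.rep} := by
      rcases eq_or_ne v 0 with rfl | hv0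
      · exact hU.imp fun X hX => ⟨hX, Submodule.zero_mem _⟩
      · obtain ⟨X, hX⟩ := exists_mem_projPt hv0
        exact ⟨X, ⟨v, hvU, hX⟩,
          (mem_ptsOf_iff_of_mem_projPt hX).1 (Submodule.subset_span (by simp))⟩
    refine ⟨X, hXU, (mem_ptsOf_iff_of_mem_projPt hp).2 (add_mem hvX ?_)⟩
    exact Submodule.smul_mem _ _ (Submodule.subset_span (by simp))

end LinearSets

section BaerSublines

variable {F : Type} [Field F] [Algebra F K]

lemma mimg_linfVecs (M : Matrix (Fin 3) (Fin 3) K) :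
    mimg M (linfVecs K) = ptsOf (Submodule.span K {M.col 0, M.col 1}) := by
  have mulVec_eq (v : Fin 3 → K) (hv : v 2 = 0) : M *ᵥ v = v 0 • M.col 0 + v 1 • M.col 1 := by
    simp [Matrix.mulVec_eq_sum, Fin.sum_univ_three, hv, Matrix.col]
  ext p
  rw [mem_ptsOf_iff]
  constructor
  · rintro ⟨v, ⟨-, hv⟩, hp⟩
    exact ⟨_, Submodule.mem_span_pair.2 ⟨v 0, v 1, (mulVec_eq v hv).symm⟩, hp⟩
  · rintro ⟨_, hv, hp⟩
    obtain ⟨a, b, rfl⟩ := Submodule.mem_span_pair.1 hv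
    have hab : M *ᵥ ![a, b, 0] = a • M.col 0 + b • M.col 1 := mulVec_eq _ rfl
    have hp' : p ∈ projPt (M *ᵥ ![a, b, 0]) := by rwa [hab]
    refine ⟨![a, b, 0], ⟨?_, rfl⟩, hp'⟩
    rintro h0
    exact hp'.1 (by rw [h0, Matrix.mulVec_zero])

lemma mimg_sublineVecs (M : Matrix (Fin 3) (Fin 3) K) :
    mimg M (sublineVecs F K) = linearSet (Submodule.span F {M.col 0, M.col 1}) := by
  have mulVec_affine (θ : F) : M *ᵥ ![algebraMap F K θ, 1, 0] = θ • M.col 0 + M.col 1 := by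
    simp [Matrix.mulVec_eq_sum, Fin.sum_univ_three, Matrix.col]
  have mulVec_infinity : M *ᵥ ![1, 0, 0] = M.col 0 := by
    simp [Matrix.mulVec_eq_sum, Fin.sum_univ_three, Matrix.col]
  ext p
  constructor
  · rintro ⟨_, ⟨θ, rfl⟩ | rfl, hp⟩
    · exact ⟨_, Submodule.mem_span_pair.2 ⟨θ, 1, by rw [one_smul, mulVec_affine]⟩, hp⟩
    · exact ⟨_, Submodule.subset_span (by simp [mulVec_infinity]), hp⟩
  · rintro ⟨_, hv, hp⟩
    obtain ⟨a, b, rfl⟩ := Submodule.mem_span_pair.1 hv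
    rcases eq_or_ne b 0 with rfl | hb
    · have ha : algebraMap F K a ≠ 0 := by
        intro ha
        exact hp.1 (by simp [← algebraMap_smul K a, ha])
      refine ⟨![1, 0, 0], Or.inr rfl, ?_⟩
      rw [mulVec_infinity, ← projPt_smul ha]
      simpa using hp
    · refine ⟨![algebraMap F K (b⁻¹ * a), 1, 0], Or.inl ⟨_, rfl⟩, ?_⟩
      rw [mulVec_affine, ← projPt_smul ((map_ne_zero (algebraMap F K)).2 hb), algebraMap_smul,
        smul_add, smul_smul, mul_inv_cancel_left₀ hb]
      exact hp

lemma isBaerSublineOf_iff {b ℓ : Set (PP K 3)} :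
    IsBaerSublineOf F b ℓ ↔ ∃ u w : Fin 3 → K, LinearIndependent K ![u, w] ∧
      ℓ = ptsOf (Submodule.span K {u, w}) ∧ b = linearSet (Submodule.span F {u, w}) := by
  constructor
  · rintro ⟨M, hM, rfl, rfl⟩
    refine ⟨M.col 0, M.col 1, ?_, mimg_linfVecs M, mimg_sublineVecs M⟩
    have hcols : LinearIndependent K M.col :=
      Matrix.linearIndependent_cols_iff_isUnit.2 ((Matrix.isUnit_iff_isUnit_det M).2 hM)
    convert hcols.comp ![0, 1] (by decide) using 1
    ext i
    fin_cases i <;> rfl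
  · rintro ⟨u, w, huw, rfl, rfl⟩
    obtain ⟨x, hx⟩ := exists_linearIndependent_snoc_of_lt_finrank huw (by simp)
    let M : Matrix (Fin 3) (Fin 3) K := (Matrix.of (Fin.snoc ![u, w] x))ᵀ
    have hM : IsUnit M.det :=
      (Matrix.isUnit_iff_isUnit_det M).1 (Matrix.linearIndependent_cols_iff_isUnit.1 hx)
    exact ⟨M, hM, (mimg_linfVecs M).symm, (mimg_sublineVecs M).symm⟩

end BaerSublines

section Dimensions

variable {F E : Type} [Field F] [AddCommGroup E] [Module F E]

lemma finrank_span_pair_eq_two {x y : E}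
    (h : LinearIndependent F ![x, y]) : Module.finrank F (Submodule.span F {x, y}) = 2 := by
  rw [← Matrix.range_cons_cons_empty x y ![], finrank_span_eq_card h, Fintype.card_fin]

lemma span_pair_eq_of_mem {x y u w : E}
    (h : LinearIndependent F ![x, y]) (hx : x ∈ Submodule.span F {u, w})
    (hy : y ∈ Submodule.span F {u, w}) : Submodule.span F {x, y} = Submodule.span F {u, w} := by
  have := FiniteDimensional.span_of_finite F (Set.toFinite {u, w})
  refine Submodule.eq_of_le_of_finrank_le (Submodule.span_le.2 (Set.pair_subset hx hy)) ?_
  rw [finrank_span_pair_eq_two h, ← Matrix.range_cons_cons_empty u w ![]]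
  exact finrank_range_le_card ![u, w]

lemma finrank_inf_add_two [FiniteDimensional F E] {W H : Submodule F E}
    (hW : Module.finrank F W + 1 = Module.finrank F E)
    (hH : Module.finrank F H + 1 = Module.finrank F E) (hne : W ≠ H) :
    Module.finrank F ↥(W ⊓ H) + 2 = Module.finrank F E := by
  have hlt : W < W ⊔ H := by
    refine le_sup_left.lt_of_ne fun h => hne ?_
    exact (Submodule.eq_of_le_of_finrank_eq (h ▸ le_sup_right) (by lia)).symm
  have hsup := Submodule.finrank_lt_finrank_of_lt hlt
  have hle := Submodule.finrank_le (W ⊔ H)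
  have hadd := Submodule.finrank_sup_add_finrank_inf_eq W H
  lia

variable [Algebra F K]

lemma linearIndependent_one_pair {τ : K} (hτF : τ ∉ Set.range (algebraMap F K)) :
    LinearIndependent F ![1, τ] := by
  refine (LinearIndependent.pair_iff' one_ne_zero).2 fun a ha => hτF ⟨a, ?_⟩
  rw [← ha, Algebra.algebraMap_eq_smul_one]

lemma isQuadraticExtension_of_span_pair {τ : K} (hτF : τ ∉ Set.range (algebraMap F K))
    (hτ : Submodule.span F {1, τ} = ⊤) : Algebra.IsQuadraticExtension F K where
  finrank_eq_two' := by
    have hli := linearIndependent_one_pair hτF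
    rw [← finrank_top F K, ← hτ, finrank_span_pair_eq_two hli]

variable [Module K E] [IsScalarTower F K E]

lemma disjoint_restrictScalars_submodule {P Q : Projectivization K E} (h : P ≠ Q) :
    Disjoint (P.submodule.restrictScalars F) (Q.submodule.restrictScalars F) := by
  have isAtom (R : Projectivization K E) : IsAtom R.submodule :=
    Submodule.isAtom_iff_finrank_eq_one.2 R.finrank_submodule
  exact (Submodule.disjoint_restrictScalars_iff F).2
    ((isAtom P).disjoint_of_ne (isAtom Q) (Projectivization.submodule_injective.ne h))

variable [Algebra.IsQuadraticExtension F K]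

lemma finrank_restrictScalars_eq_two_mul (H : Submodule K E) :
    Module.finrank F (H.restrictScalars F) = 2 * Module.finrank K H := by
  rw [← Algebra.IsQuadraticExtension.finrank_eq_two F K]
  exact (Module.finrank_mul_finrank F K H).symm

lemma finrank_restrictScalars_submodule (P : Projectivization K E) :
    Module.finrank F (P.submodule.restrictScalars F) = 2 := by
  rw [finrank_restrictScalars_eq_two_mul, P.finrank_submodule]

lemma finrank_sup_restrictScalars_submodule {S : Submodule F E} [FiniteDimensional F S]
    {P : Projectivization K E} (h : Disjoint S (P.submodule.restrictScalars F)) :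
    Module.finrank F ↥(S ⊔ P.submodule.restrictScalars F) = Module.finrank F S + 2 := by
  have hP := finrank_restrictScalars_submodule (F := F) P
  have : FiniteDimensional F (P.submodule.restrictScalars F) :=
    Module.finite_of_finrank_pos (by lia)
  rw [← hP, ← Submodule.finrank_sup_add_finrank_inf_eq, h.eq_bot, finrank_bot, add_zero]

variable {H : Submodule K E} {V : Submodule F E}

lemma exists_mem_smul_mem (hH : Module.finrank K H = 2) (hV : V ≤ H.restrictScalars F)
    (hV3 : Module.finrank F V = 3) (τ : K) : ∃ v ∈ V, v ≠ 0 ∧ τ • v ∈ V := by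
  have : FiniteDimensional F V := Module.finite_of_finrank_pos (by lia)
  rcases eq_or_ne τ 0 with rfl | hτ0
  · have hV0 : V ≠ ⊥ := Submodule.one_le_finrank_iff.1 (by lia)
    obtain ⟨v, hv, hv0⟩ := V.exists_mem_ne_zero_of_ne_bot hV0
    exact ⟨v, hv, hv0, by rw [zero_smul]; exact V.zero_mem⟩
  let g : E ≃ₗ[F] E := (LinearEquiv.smulOfNeZero K E τ hτ0).restrictScalars F
  let V' : Submodule F E := V.map (g : E →ₗ[F] E)
  have hV'3 : Module.finrank F V' = 3 := by rw [← hV3, g.finrank_map_eq]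
  have hV' : V' ≤ H.restrictScalars F := by
    rintro _ ⟨v, hv, rfl⟩
    exact H.smul_mem τ (hV hv)
  have hH4 : Module.finrank F (H.restrictScalars F) = 4 := by
    rw [finrank_restrictScalars_eq_two_mul, hH]
  have : FiniteDimensional F V' := Module.finite_of_finrank_pos (by lia)
  have : FiniteDimensional F (H.restrictScalars F) := Module.finite_of_finrank_pos (by lia)
  have hsup := Submodule.finrank_mono (sup_le hV hV')
  have hadd := Submodule.finrank_sup_add_finrank_inf_eq V V'
  have hne : V ⊓ V' ≠ ⊥ := Submodule.one_le_finrank_iff.1 (by lia)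
  obtain ⟨_, ⟨hτv, v, hv, rfl⟩, hne0⟩ := (V ⊓ V').exists_mem_ne_zero_of_ne_bot hne
  exact ⟨v, hv, fun h => hne0 (by rw [h, map_zero]), hτv⟩

lemma existsUnique_submodule_restrictScalars_le {τ : K} (hτ : Submodule.span F {1, τ} = ⊤)
    (hH : Module.finrank K H = 2) (hV : V ≤ H.restrictScalars F)
    (hV3 : Module.finrank F V = 3) :
    ∃! P : Projectivization K E, P.submodule.restrictScalars F ≤ V := by
  obtain ⟨v, hv, hv0, hτv⟩ := exists_mem_smul_mem hH hV hV3 τ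
  have hP : (Projectivization.mk K v hv0).submodule.restrictScalars F ≤ V := by
    rw [Projectivization.submodule_mk, ← Submodule.span_smul_of_span_eq_top hτ,
      Submodule.span_le]
    rintro _ ⟨c, (rfl | rfl), w, rfl, rfl⟩
    · simpa only [one_smul]
    · exact hτv
  refine ⟨_, hP, fun Q hQ => of_not_not fun hne => ?_⟩
  have : FiniteDimensional F V := Module.finite_of_finrank_pos (by lia)
  have : FiniteDimensional F (Q.submodule.restrictScalars F) :=
    Submodule.finiteDimensional_of_le hQ
  have hsup := finrank_sup_restrictScalars_submodule
    (disjoint_restrictScalars_submodule (F := F) hne)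
  have hle := Submodule.finrank_mono (sup_le hQ hP)
  rw [hsup, finrank_restrictScalars_submodule] at hle
  lia

end Dimensions

section Pencils

variable {F : Type} [Field F] [Algebra F K] {u w : Fin 3 → K} {P : PP K 3}

lemma linearIndependent_pair_of_apply_eq_zero {i : Fin n} {x y : Fin n → K} (hx0 : x ≠ 0)
    (hx : x i = 0) (hy : y i ≠ 0) : LinearIndependent K ![x, y] := by
  refine (LinearIndependent.pair_iff' hx0).2 ?_
  rintro a rfl
  exact hy (by rw [Pi.smul_apply, hx, smul_zero])

lemma linearIndependent_restrictScalars_pair {x y : Fin n → K} (h : LinearIndependent K ![x, y]) :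
    LinearIndependent F ![x, y] :=
  h.restrict_scalars <| by
    simpa only [← Algebra.algebraMap_eq_smul_one] using (algebraMap F K).injective

lemma exists_mem_span_pair_apply_ne_zero (huw : LinearIndependent K ![u, w])
    (h : ∃! X, X ∈ linearSet (Submodule.span F {u, w}) ∩ linf K) :
    ∃ y ∈ Submodule.span F {u, w}, y 2 ≠ 0 := by
  by_contra! hU
  have mk_mem {v : Fin 3 → K} (hv : v ∈ Submodule.span F {u, w}) (hv0 : v ≠ 0) :
      Projectivization.mk K v hv0 ∈ linearSet (Submodule.span F {u, w}) ∩ linf K :=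
    ⟨⟨v, hv, hv0, rfl⟩, (mem_linf_iff_of_mem_projPt ⟨hv0, rfl⟩).2 (hU v hv)⟩
  have hu0 : u ≠ 0 := huw.ne_zero 0
  have hw0 : w ≠ 0 := huw.ne_zero 1
  have hwu := h.unique (mk_mem (Submodule.subset_span (by simp)) hw0)
    (mk_mem (Submodule.subset_span (by simp)) hu0)
  obtain ⟨a, ha⟩ := (Projectivization.mk_eq_mk_iff' K _ _ _ _).1 hwu
  exact (LinearIndependent.pair_iff' hu0).1 huw a ha

open scoped Pointwise in
lemma exists_linearSet_span_pair_eq (huw : LinearIndependent K ![u, w])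
    (h : ∃! X, X ∈ linearSet (Submodule.span F {u, w}) ∩ linf K) :
    ∃ u' w' : Fin 3 → K, u' ∈ Submodule.span K {u, w} ∧ u' ≠ 0 ∧ u' 2 = 0 ∧ w' 2 = 1 ∧
      linearSet (Submodule.span F {u, w}) = linearSet (Submodule.span F {u', w'}) := by
  obtain ⟨X, ⟨x, hxU, hX⟩, hXinf⟩ := h.exists
  obtain ⟨y, hyU, hy2⟩ := exists_mem_span_pair_apply_ne_zero huw h
  have hx2 : x 2 = 0 := (mem_linf_iff_of_mem_projPt hX).1 hXinf
  have hxy : LinearIndependent F ![x, y] :=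
    linearIndependent_restrictScalars_pair (linearIndependent_pair_of_apply_eq_zero hX.1 hx2 hy2)
  have hxK : x ∈ Submodule.span K {u, w} := Submodule.span_le_restrictScalars F K _ hxU
  refine ⟨(y 2)⁻¹ • x, (y 2)⁻¹ • y, Submodule.smul_mem _ _ hxK,
    smul_ne_zero (inv_ne_zero hy2) hX.1, by simp [hx2], by simp [hy2], ?_⟩
  rw [← span_pair_eq_of_mem hxy hxU hyU, ← linearSet_smul (inv_ne_zero hy2), Submodule.smul_span,
    Set.smul_set_insert, Set.smul_set_singleton]

lemma disjoint_span_pair_submodule (hP : P ∈ linf K) (hu : u 2 = 0) (huP : u ∉ P.submodule)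
    (hw : w 2 ≠ 0) : Disjoint (Submodule.span K {u, w}) P.submodule := by
  refine Submodule.disjoint_def.2 fun v hv hvP => ?_
  obtain ⟨a, b, rfl⟩ := Submodule.mem_span_pair.1 hv
  have hP2 : P.submodule ≤ LinearMap.ker (LinearMap.proj 2) := submodule_le_iff_mem_ptsOf.2 hP
  obtain rfl : b = 0 := by simpa [hu, hw] using hP2 hvP
  rw [zero_smul, add_zero] at hvP ⊢
  by_contra ha
  exact huP ((P.submodule.smul_mem_iff (left_ne_zero_of_smul ha)).1 hvP)

lemma isLinfBaerPencil_linearSet (hP : P ∈ linf K) (hu : u 2 = 0) (huP : u ∉ P.submodule)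
    (hw : w 2 ≠ 0) :
    IsLinfBaerPencil F
      (linearSet (Submodule.span F {u, w} ⊔ P.submodule.restrictScalars F)) P := by
  have hu0 : u ≠ 0 := fun h => huP (h ▸ zero_mem _)
  have huw : LinearIndependent K ![u, w] :=
    linearIndependent_pair_of_apply_eq_zero hu0 hu hw
  obtain ⟨X, hX⟩ := exists_mem_projPt hu0
  have hXb : X ∈ linearSet (Submodule.span F {u, w}) :=
    ⟨u, Submodule.subset_span (by simp), hX⟩
  refine ⟨hP, _, _, isBaerSublineOf_iff.2 ⟨u, w, huw, rfl, rfl⟩, fun hPℓ => P.rep_nonzero ?_, ?_,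
    (biUnion_linearSet_lineTh ⟨X, hXb⟩ P).symm⟩
  · have hdisj := Submodule.disjoint_def.1 (disjoint_span_pair_submodule hP hu huP hw)
    refine hdisj _ hPℓ ?_
    exact submodule_le_iff_mem_ptsOf.1 le_rfl
  · refine ⟨X, ⟨hXb, (mem_linf_iff_of_mem_projPt hX).2 hu⟩, ?_⟩
    rintro Y ⟨⟨_, hv, hY⟩, hYinf⟩
    obtain ⟨a, b, rfl⟩ := Submodule.mem_span_pair.1 hv
    obtain rfl : b = 0 := by
      simpa [hu, hw] using (mem_linf_iff_of_mem_projPt hY).1 hYinf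
    rw [zero_smul, add_zero, ← algebraMap_smul K] at hY
    rw [projPt_smul (left_ne_zero_of_smul hY.1)] at hY
    exact projPt_subsingleton u hY hX

lemma exists_eq_linearSet_of_isLinfBaerPencil {𝒦 : Set (PP K 3)} (h : IsLinfBaerPencil F 𝒦 P) :
    ∃ u w : Fin 3 → K, u 2 = 0 ∧ u ∉ P.submodule ∧ w 2 = 1 ∧
      𝒦 = linearSet (Submodule.span F {u, w} ⊔ P.submodule.restrictScalars F) := by
  obtain ⟨-, ℓ, b, hb, hPℓ, hX, rfl⟩ := h
  obtain ⟨u, w, huw, rfl, rfl⟩ := isBaerSublineOf_iff.1 hb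
  obtain ⟨u', w', hu'ℓ, hu'0, hu', hw', hb'⟩ := exists_linearSet_span_pair_eq huw hX
  refine ⟨u', w', hu', fun hu'P => hPℓ ?_, hw', ?_⟩
  · rw [P.submodule_eq] at hu'P
    obtain ⟨c, rfl⟩ := Submodule.mem_span_singleton.1 hu'P
    exact (Submodule.smul_mem_iff _ (left_ne_zero_of_smul hu'0)).1 hu'ℓ
  · rw [hb'] at hX ⊢
    exact biUnion_linearSet_lineTh (hX.exists.imp fun _ h => h.1) P

lemma finrank_span_pair_sup_submodule [Algebra.IsQuadraticExtension F K] (hP : P ∈ linf K)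
    (hu : u 2 = 0) (huP : u ∉ P.submodule) (hw : w 2 ≠ 0) :
    Module.finrank F ↥(Submodule.span F {u, w} ⊔ P.submodule.restrictScalars F) = 4 := by
  have hu0 : u ≠ 0 := fun h => huP (h ▸ zero_mem _)
  have huw : LinearIndependent F ![u, w] :=
    linearIndependent_restrictScalars_pair (linearIndependent_pair_of_apply_eq_zero hu0 hu hw)
  have hdisj : Disjoint (Submodule.span F {u, w}) (P.submodule.restrictScalars F) :=
    ((Submodule.disjoint_restrictScalars_iff F).2
      (disjoint_span_pair_submodule hP hu huP hw)).mono_left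
        (Submodule.span_le_restrictScalars F K _)
  have := FiniteDimensional.span_of_finite F (Set.toFinite {u, w})
  rw [finrank_sup_restrictScalars_submodule hdisj, finrank_span_pair_eq_two huw]

end Pencils

section BruckBose

variable {F : Type} [Field F] [Algebra F K] {τ : K} {c0 c1 : K → F}

lemma span_one_pair_eq_top (hc : ∀ x : K, x = algebraMap F K (c0 x) + algebraMap F K (c1 x) * τ) :
    Submodule.span F {1, τ} = ⊤ := by
  refine Submodule.eq_top_iff'.2 fun x => Submodule.mem_span_pair.2 ⟨c0 x, c1 x, ?_⟩
  rw [← Algebra.algebraMap_eq_smul_one, Algebra.smul_def, ← hc]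

variable (F τ) in
/-- The `F`-linear map `F⁵ → K³` reading `(x₀, x₁, y₀, y₁, z)` as `(x₀ + x₁τ, y₀ + y₁τ, z)`. On
affine points it induces the inverse of the Bruck–Bose map, and it is also defined at infinity. -/
def bbLift : (Fin 5 → F) →ₗ[F] (Fin 3 → K) where
  toFun w := ![algebraMap F K (w 0) + algebraMap F K (w 1) * τ,
    algebraMap F K (w 2) + algebraMap F K (w 3) * τ, algebraMap F K (w 4)]
  map_add' v w := by
    ext i
    fin_cases i <;> simp <;> ring
  map_smul' a w := by
    ext i
    fin_cases i <;> simp [Algebra.smul_def] <;> ring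

lemma bbLift_apply_two (w : Fin 5 → F) : bbLift F τ w 2 = algebraMap F K (w 4) := rfl

lemma bbLift_injective (hτF : τ ∉ Set.range (algebraMap F K)) :
    Function.Injective (bbLift F τ) := by
  have hli := linearIndependent_one_pair hτF
  rw [injective_iff_map_eq_zero]
  intro w hw
  have coord {a b : F} (h : algebraMap F K a + algebraMap F K b * τ = 0) : a = 0 ∧ b = 0 := by
    refine LinearIndependent.pair_iff.1 hli a b ?_
    rwa [← Algebra.algebraMap_eq_smul_one, Algebra.smul_def]
  obtain ⟨h0, h1⟩ := coord (congrFun hw 0)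
  obtain ⟨h2, h3⟩ := coord (congrFun hw 1)
  have h4 : w 4 = 0 := (map_eq_zero (algebraMap F K)).1 (congrFun hw 2)
  ext i
  fin_cases i <;> assumption

lemma exists_bbLift_eq
    (hc : ∀ x : K, x = algebraMap F K (c0 x) + algebraMap F K (c1 x) * τ)
    {v : Fin 3 → K} {z : F} (hz : algebraMap F K z = v 2) : ∃ w, bbLift F τ w = v := by
  refine ⟨![c0 (v 0), c1 (v 0), c0 (v 1), c1 (v 1), z], ?_⟩
  ext i
  fin_cases i
  exacts [(hc _).symm, (hc _).symm, hz]

lemma bbLift_bbVec (hc : ∀ x : K, x = algebraMap F K (c0 x) + algebraMap F K (c1 x) * τ)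
    {p : PP K 3} (hp : p ∉ linf K) : bbLift F τ (bbVec c0 c1 p) = (p.rep 2)⁻¹ • p.rep := by
  have hp2 : p.rep 2 ≠ 0 := hp
  ext i
  fin_cases i
  · exact (hc _).symm.trans (div_eq_inv_mul _ _)
  · exact (hc _).symm.trans (div_eq_inv_mul _ _)
  · exact (map_one (algebraMap F K)).trans (inv_mul_cancel₀ hp2).symm

lemma mem_projPt_bbLift_iff (hτF : τ ∉ Set.range (algebraMap F K))
    (hc : ∀ x : K, x = algebraMap F K (c0 x) + algebraMap F K (c1 x) * τ)
    {p : PP K 3} (hp : p ∉ linf K) {w : Fin 5 → F} :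
    p ∈ projPt (bbLift F τ w) ↔ bb c0 c1 p ∈ projPt w := by
  have hp2 : p.rep 2 ≠ 0 := hp
  have hbb := bbLift_bbVec hc hp
  constructor
  · intro h
    obtain ⟨a, -, ha⟩ := exists_smul_eq_rep_of_mem_projPt h
    have ha2 : a * algebraMap F K (w 4) = p.rep 2 := congrFun ha 2
    have ha0 : a ≠ 0 := left_ne_zero_of_mul (ha2 ▸ hp2)
    have hw4 : w 4 ≠ 0 := (map_ne_zero (algebraMap F K)).1 (right_ne_zero_of_mul (ha2 ▸ hp2))
    have hw : (w 4)⁻¹ • w = bbVec c0 c1 p := by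
      refine bbLift_injective hτF ?_
      rw [map_smul, hbb, ← ha2, ← ha, smul_smul, ← algebraMap_smul K, map_inv₀, mul_inv,
        mul_right_comm, inv_mul_cancel₀ ha0, one_mul]
    rw [← projPt_smul (inv_ne_zero hw4), hw]
    exact ⟨_, rfl⟩
  · rintro ⟨hw0, h⟩
    obtain ⟨a, ha⟩ := (Projectivization.mk_eq_mk_iff' F _ _ _ _).1 h
    refine mem_projPt_of_smul_eq_rep (a := p.rep 2 * algebraMap F K a) ?_
    rw [mul_smul, algebraMap_smul, ← map_smul, ha, hbb, smul_inv_smul₀ hp2]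

lemma bijOn_bb (hτF : τ ∉ Set.range (algebraMap F K))
    (hc : ∀ x : K, x = algebraMap F K (c0 x) + algebraMap F K (c1 x) * τ)
    (W : Submodule F (Fin 5 → F)) :
    Set.BijOn (bb c0 c1) (linearSet (W.map (bbLift F τ)) \ linf K) (ptsOf W \ sinf F) := by
  have mem_bb {p : PP K 3} : bb c0 c1 p ∈ projPt (bbVec c0 c1 p) := ⟨_, rfl⟩
  refine ⟨?_, ?_, ?_⟩
  · rintro p ⟨⟨_, ⟨w, hw, rfl⟩, hpw⟩, hp⟩
    refine ⟨mem_ptsOf_iff.2 ⟨w, hw, (mem_projPt_bbLift_iff hτF hc hp).1 hpw⟩, fun h => ?_⟩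
    exact one_ne_zero ((mem_sinf_iff_of_mem_projPt mem_bb).1 h)
  · rintro p ⟨-, hp⟩ p' ⟨-, hp'⟩ h
    exact projPt_subsingleton _ ((mem_projPt_bbLift_iff hτF hc hp).2 mem_bb)
      ((mem_projPt_bbLift_iff hτF hc hp').2 (h ▸ mem_bb))
  · rintro r ⟨hr, hrinf⟩
    have hr4 : r.rep 4 ≠ 0 := hrinf
    obtain ⟨p, hp⟩ := exists_mem_projPt
      (((bbLift_injective hτF).ne r.rep_nonzero).trans_eq (map_zero _))
    have hpinf : p ∉ linf K := by
      rwa [mem_linf_iff_of_mem_projPt hp, bbLift_apply_two, map_eq_zero]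
    exact ⟨p, ⟨⟨_, ⟨_, hr, rfl⟩, hp⟩, hpinf⟩, projPt_subsingleton _
      ((mem_projPt_bbLift_iff hτF hc hpinf).1 hp) (mem_projPt_rep r)⟩

lemma bbLift_spreadV1
    (hc : ∀ x : K, x = algebraMap F K (c0 x) + algebraMap F K (c1 x) * τ) (t : Option K) :
    bbLift F τ (spreadV1 c0 c1 t) = ptInfVec t := by
  ext i
  rcases t with - | δ <;> fin_cases i <;> simp [bbLift, spreadV1, ptInfVec, ← hc]

lemma bbLift_spreadV2 {t0 t1 : F} (hτ : τ ^ 2 = algebraMap F K t1 * τ + algebraMap F K t0)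
    (hc : ∀ x : K, x = algebraMap F K (c0 x) + algebraMap F K (c1 x) * τ) (t : Option K) :
    bbLift F τ (spreadV2 c0 c1 t0 t1 t) = τ • ptInfVec t := by
  rcases t with - | δ
  · ext i
    fin_cases i <;> simp [bbLift, spreadV2, ptInfVec]
  · have hδ : algebraMap F K (t0 * c1 δ) + algebraMap F K (c0 δ + t1 * c1 δ) * τ = τ * δ := by
      simp only [map_add, map_mul]
      linear_combination -algebraMap F K (c1 δ) * hτ - τ * hc δ
    ext i
    fin_cases i
    · exact hδ
    · simp [bbLift, spreadV2, ptInfVec]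
    · simp [bbLift, spreadV2, ptInfVec]

lemma map_bbLift_span_spread {t0 t1 : F}
    (hτ : τ ^ 2 = algebraMap F K t1 * τ + algebraMap F K t0)
    (hc : ∀ x : K, x = algebraMap F K (c0 x) + algebraMap F K (c1 x) * τ) (t : Option K) :
    (Submodule.span F {spreadV1 c0 c1 t, spreadV2 c0 c1 t0 t1 t}).map (bbLift F τ) =
      (ptInf t).submodule.restrictScalars F := by
  rw [Submodule.map_span, Set.image_pair, bbLift_spreadV1 hc, bbLift_spreadV2 hτ hc, ptInf,
    Projectivization.submodule_mk, ← Submodule.span_smul_of_span_eq_top (span_one_pair_eq_top hc),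
    Set.smul_singleton, Set.image_pair, one_smul]

lemma spreadLine_subset_ptsOf_iff {t0 t1 : F}
    (hτ : τ ^ 2 = algebraMap F K t1 * τ + algebraMap F K t0)
    (hτF : τ ∉ Set.range (algebraMap F K))
    (hc : ∀ x : K, x = algebraMap F K (c0 x) + algebraMap F K (c1 x) * τ) {t : Option K}
    {W : Submodule F (Fin 5 → F)} :
    spreadLine c0 c1 t0 t1 t ⊆ ptsOf W ↔
      (ptInf t).submodule.restrictScalars F ≤ W.map (bbLift F τ) := by
  rw [spreadLine, ptsOf_subset_ptsOf_iff, ← map_bbLift_span_spread hτ hc,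
    Submodule.map_le_map_iff_of_injective (bbLift_injective hτF)]

end BruckBose

section Hyperplanes

variable {F : Type} [Field F] [Algebra F K]

lemma finrank_ker_proj_add_one (i : Fin n) :
    Module.finrank K (LinearMap.ker (LinearMap.proj i : (Fin n → K) →ₗ[K] K)) + 1 = n := by
  have hne : (LinearMap.proj i : (Fin n → K) →ₗ[K] K) ≠ 0 := fun h =>
    one_ne_zero (α := K) (by simpa using DFunLike.congr_fun h (Pi.single i 1))
  simpa only [Module.finrank_fin_fun] using Module.Dual.finrank_ker_add_one_of_ne_zero hne

lemma isLinfBaerPencil_linearSet_of_finrank [Algebra.IsQuadraticExtension F K]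
    {V : Submodule F (Fin 3 → K)} {P : PP K 3} (hV : Module.finrank F V = 4)
    (hVinf : Module.finrank F
      ↥(V ⊓ (LinearMap.ker (LinearMap.proj (R := K) 2)).restrictScalars F) = 3)
    (hP : P ∈ linf K) (hPV : P.submodule.restrictScalars F ≤ V) :
    IsLinfBaerPencil F (linearSet V) P := by
  have : FiniteDimensional F V := Module.finite_of_finrank_pos (by lia)
  obtain ⟨u, ⟨huV, hu⟩, huP⟩ :
      ∃ u ∈ V ⊓ (LinearMap.ker (LinearMap.proj (R := K) 2)).restrictScalars F,
        u ∉ P.submodule := by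
    by_contra! hle
    have := Submodule.finiteDimensional_of_le hPV
    have := Submodule.finrank_mono (t := P.submodule.restrictScalars F) hle
    rw [hVinf, finrank_restrictScalars_submodule] at this
    lia
  obtain ⟨w, hwV, hw⟩ : ∃ w ∈ V, w 2 ≠ 0 := by
    by_contra! hker
    rw [inf_eq_left.2 hker, hV] at hVinf
    lia
  have hspan : Submodule.span F {u, w} ⊔ P.submodule.restrictScalars F = V :=
    Submodule.eq_of_le_of_finrank_eq
      (sup_le (Submodule.span_le.2 (Set.pair_subset huV hwV)) hPV)
      (by rw [finrank_span_pair_sup_submodule hP hu huP hw, hV])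
  exact hspan ▸ isLinfBaerPencil_linearSet hP hu huP hw

variable {τ : K} {c0 c1 : K → F} {W : Submodule F (Fin 5 → F)}

lemma finrank_map_bbLift (hτF : τ ∉ Set.range (algebraMap F K)) (W : Submodule F (Fin 5 → F)) :
    Module.finrank F (W.map (bbLift F τ)) = Module.finrank F W :=
  (Submodule.equivMapOfInjective _ (bbLift_injective hτF) W).finrank_eq.symm

lemma map_bbLift_inf_ker (W : Submodule F (Fin 5 → F)) :
    W.map (bbLift F τ) ⊓ (LinearMap.ker (LinearMap.proj (R := K) 2)).restrictScalars F =
      (W ⊓ LinearMap.ker (LinearMap.proj 4)).map (bbLift F τ) := by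
  ext v
  constructor
  · rintro ⟨⟨w, hw, rfl⟩, hw2⟩
    exact ⟨w, ⟨hw, (map_eq_zero (algebraMap F K)).1 hw2⟩, rfl⟩
  · rintro ⟨w, ⟨hw, hw4⟩, rfl⟩
    exact ⟨⟨w, hw, rfl⟩, (map_eq_zero (algebraMap F K)).2 hw4⟩

lemma finrank_map_bbLift_inf_ker (hτF : τ ∉ Set.range (algebraMap F K))
    (hW4 : Module.finrank F W = 4) (hWne : ptsOf W ≠ sinf F) :
    Module.finrank F ↥(W.map (bbLift F τ) ⊓
      (LinearMap.ker (LinearMap.proj (R := K) 2)).restrictScalars F) = 3 := by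
  have hne : W ≠ LinearMap.ker (LinearMap.proj 4) := by
    rintro rfl
    exact hWne sinf_eq_ptsOf.symm
  have hker := finrank_ker_proj_add_one (K := F) (4 : Fin 5)
  have hinf := finrank_inf_add_two (by rw [hW4, Module.finrank_fin_fun])
    (by rw [hker, Module.finrank_fin_fun]) hne
  rw [Module.finrank_fin_fun] at hinf
  rw [map_bbLift_inf_ker, finrank_map_bbLift hτF]
  lia

lemma existsUnique_spreadLine_subset {t0 t1 : F}
    (hτ : τ ^ 2 = algebraMap F K t1 * τ + algebraMap F K t0)
    (hτF : τ ∉ Set.range (algebraMap F K))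
    (hc : ∀ x : K, x = algebraMap F K (c0 x) + algebraMap F K (c1 x) * τ)
    (hW4 : Module.finrank F W = 4) (hWne : ptsOf W ≠ sinf F) :
    ∃! t : Option K, spreadLine c0 c1 t0 t1 t ⊆ ptsOf W := by
  have hspan := span_one_pair_eq_top hc
  have := isQuadraticExtension_of_span_pair hτF hspan
  have hker : Module.finrank K (LinearMap.ker (LinearMap.proj (R := K) (2 : Fin 3))) = 2 :=
    Nat.succ_injective (finrank_ker_proj_add_one 2)
  obtain ⟨P, hP, hP_unique⟩ := existsUnique_submodule_restrictScalars_le hspan hker inf_le_right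
    (finrank_map_bbLift_inf_ker hτF hW4 hWne)
  obtain ⟨hPW, hPker⟩ := le_inf_iff.1 hP
  obtain ⟨t, rfl⟩ := exists_ptInf_eq (submodule_le_iff_mem_ptsOf.1 hPker)
  refine ⟨t, (spreadLine_subset_ptsOf_iff hτ hτF hc).2 hPW, fun s hs => ?_⟩
  exact ptInf_injective (hP_unique _ (le_inf ((spreadLine_subset_ptsOf_iff hτ hτF hc).1 hs)
    (submodule_le_iff_mem_ptsOf.2 (ptInf_mem_linf s))))

lemma exists_hyperplane_map_bbLift_eq
    (hτF : τ ∉ Set.range (algebraMap F K))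
    (hc : ∀ x : K, x = algebraMap F K (c0 x) + algebraMap F K (c1 x) * τ)
    {𝒦 : Set (PP K 3)} {P : PP K 3} (h : IsLinfBaerPencil F 𝒦 P) :
    ∃ W : Submodule F (Fin 5 → F), Module.finrank F W = 4 ∧ ptsOf W ≠ sinf F ∧
      𝒦 = linearSet (W.map (bbLift F τ)) := by
  have := isQuadraticExtension_of_span_pair hτF (span_one_pair_eq_top hc)
  obtain ⟨u, w, hu, huP, hw, rfl⟩ := exists_eq_linearSet_of_isLinfBaerPencil h
  set V := Submodule.span F {u, w} ⊔ P.submodule.restrictScalars F with hV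
  have hPker : P.submodule ≤ LinearMap.ker (LinearMap.proj 2) := submodule_le_iff_mem_ptsOf.2 h.1
  have hu_range : u ∈ LinearMap.range (bbLift F τ) :=
    exists_bbLift_eq hc ((map_zero _).trans hu.symm)
  have hw_range : w ∈ LinearMap.range (bbLift F τ) :=
    exists_bbLift_eq hc ((map_one _).trans hw.symm)
  have hV_range : V ≤ LinearMap.range (bbLift F τ) :=
    sup_le (Submodule.span_le.2 (Set.pair_subset hu_range hw_range)) fun v hv =>
      exists_bbLift_eq hc ((map_zero _).trans (hPker hv).symm)
  have hmap : (V.comap (bbLift F τ)).map (bbLift F τ) = V := Submodule.map_comap_eq_of_le hV_range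
  refine ⟨V.comap (bbLift F τ), ?_, fun hsinf => ?_, by rw [hmap]⟩
  · rw [← finrank_map_bbLift hτF, hmap]
    exact finrank_span_pair_sup_submodule h.1 hu huP (hw ▸ one_ne_zero)
  · obtain ⟨x, rfl⟩ := hw_range
    have hx : x ∈ V.comap (bbLift F τ) :=
      Submodule.mem_sup_left (Submodule.subset_span (by simp))
    have hx4 : x 4 = 0 := ptsOf_subset_ptsOf_iff.1 (hsinf.trans sinf_eq_ptsOf).subset hx
    exact one_ne_zero (hw.symm.trans ((map_eq_zero (algebraMap F K)).2 hx4))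

end Hyperplanes

theorem statement_1_general
    {F K : Type} [Field F] [Field K] [Algebra F K] (τ : K) (t0 t1 : F)
    (hτ : τ ^ 2 = algebraMap F K t1 * τ + algebraMap F K t0)
    (hτF : τ ∉ Set.range (algebraMap F K))
    (c0 c1 : K → F)
    (hc : ∀ x : K, x = algebraMap F K (c0 x) + algebraMap F K (c1 x) * τ)
    (Wsub : Submodule F (Fin 5 → F)) (hW4 : Module.finrank F Wsub = 4)
    (hWne : ptsOf Wsub ≠ sinf F) :
    ((∃! t : Option K, spreadLine c0 c1 t0 t1 t ⊆ ptsOf Wsub) ∧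
      ∀ t : Option K, spreadLine c0 c1 t0 t1 t ⊆ ptsOf Wsub →
        ∃ 𝒦 : Set (PP K 3), IsLinfBaerPencil F 𝒦 (ptInf t) ∧
          Set.BijOn (bb c0 c1) (𝒦 \ linf K) (ptsOf Wsub \ sinf F)) ∧
    (∀ (𝒦 : Set (PP K 3)) (P : PP K 3), IsLinfBaerPencil F 𝒦 P →
      ∃ W' : Submodule F (Fin 5 → F), Module.finrank F W' = 4 ∧ ptsOf W' ≠ sinf F ∧
        Set.BijOn (bb c0 c1) (𝒦 \ linf K) (ptsOf W' \ sinf F)) := by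
  have := isQuadraticExtension_of_span_pair hτF (span_one_pair_eq_top hc)
  refine ⟨⟨existsUnique_spreadLine_subset hτ hτF hc hW4 hWne, fun t ht => ?_⟩, fun 𝒦 P h𝒦 => ?_⟩
  · have hV4 : Module.finrank F (Wsub.map (bbLift F τ)) = 4 := by rw [finrank_map_bbLift hτF, hW4]
    exact ⟨_, isLinfBaerPencil_linearSet_of_finrank hV4
      (finrank_map_bbLift_inf_ker hτF hW4 hWne) (ptInf_mem_linf t)
      ((spreadLine_subset_ptsOf_iff hτ hτF hc).1 ht), bijOn_bb hτF hc Wsub⟩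
  · obtain ⟨W', hW'4, hW'ne, rfl⟩ := exists_hyperplane_map_bbLift_eq hτF hc h𝒦
    exact ⟨W', hW'4, hW'ne, bijOn_bb hτF hc W'⟩

/-- A hyperplane `Π ≠ Σ∞` of `PG(4,q)` contains a unique spread line `[T]`, and
corresponds to an `ℓ∞`-Baer pencil with vertex `T̄`; conversely every `ℓ∞`-Baer pencil
correspondsds to a hyperplane in this way. -/
theorem statement_1
    {F K : Type} [Field F] [Field K] [Fintype F] [Fintype K] [Algebra F K]
    (q : ℕ) (hq : Fintype.card F = q) (hK : Fintype.card K = q ^ 2)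
    (τ : K) (t0 t1 : F)
    (hτ : τ ^ 2 = algebraMap F K t1 * τ + algebraMap F K t0)
    (hτF : τ ∉ Set.range (algebraMap F K))
    (c0 c1 : K → F)
    (hc : ∀ x : K, x = algebraMap F K (c0 x) + algebraMap F K (c1 x) * τ)
    (Wsub : Submodule F (Fin 5 → F)) (hW4 : Module.finrank F Wsub = 4)
    (hWne : ptsOf Wsub ≠ sinf F) :
    ((∃! t : Option K, spreadLine c0 c1 t0 t1 t ⊆ ptsOf Wsub) ∧
      ∀ t : Option K, spreadLine c0 c1 t0 t1 t ⊆ ptsOf Wsub →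
        ∃ 𝒦 : Set (PP K 3), IsLinfBaerPencil F 𝒦 (ptInf t) ∧
          Set.BijOn (bb c0 c1) (𝒦 \ linf K) (ptsOf Wsub \ sinf F)) ∧
    (∀ (𝒦 : Set (PP K 3)) (P : PP K 3), IsLinfBaerPencil F 𝒦 P →
      ∃ W' : Submodule F (Fin 5 → F), Module.finrank F W' = 4 ∧ ptsOf W' ≠ sinf F ∧
        Set.BijOn (bb c0 c1) (𝒦 \ linf K) (ptsOf W' \ sinf F)) :=
  statement_1_general τ t0 t1 hτ hτF c0 c1 hc Wsub hW4 hWne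

end BaerConics
end
end

section
/- Let B be a Baer subplane of PG(2,q²) tangent to ℓ∞ at the point T̄ = B ∩ ℓ∞, and let P̄ ∈ ℓ∞ with P̄ ≠ T̄. Then every ℓ∞-Baer pencil with vertex P̄ meets B either in an F_q-conic contained in B and containing T̄, or in the union of two lines of B, namely the unique line of B whose extension contains P̄ together with one line of B through T̄. Moreover, among the ℓ∞-Baer pencils with vertex P̄, exactly q²−1 are of the first type and exactly q+1 are of the second type, each of the latter containing a different one of the q+1 lines of B through T̄. -/
open scoped Classical
open Matrix

noncomputable section

namespace BaerConics

variable {K : Type} [Field K] {m n : ℕ}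

/-!
In suitable homogeneous coordinates `B` consists of the points `(f, w, σ w)` with `f ∈ F` and
`w ∈ K`, where `σ` is the conjugation of `K` over `F`, the line at infinity is `y = 0`,
`T = (1, 0, 0)` and `P = (0, 0, 1)`. The line joining `P` to `(t, 1, 0)` is `x = t * y`, and the
pencils with vertex `P` correspond to the affine `F`-lines `A` of the plane `K` of slopes: a point
of `B` with `w ≠ 0` lies on the pencil of `A` iff `f / w ∈ A`.

If `A` avoids `0`, then `f = x * w` with `x = b + θ * a` in `A`, so `x * w = σ x * σ w` and the
point is `(x * σ x, σ x, x)`, which is quadratic in `θ`: a conic, through `T` at `θ = ∞`. If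
`A = F * a`, then `f / w ∈ A` says that `f = 0`, a line through `P`, or `w ∈ F * a⁻¹`, a line
through `T`. The two counts are those of the affine lines of `K` missing and containing `0`.
-/

lemma exists_ker_eq_of_finrank_add_one {k V : Type*} [Field k] [AddCommGroup V]
    [Module k V] [FiniteDimensional k V] {W : Submodule k V}
    (hW : Module.finrank k W + 1 = Module.finrank k V) :
    ∃ g : Module.Dual k V, g ≠ 0 ∧ W = g.ker := by
  have hlt : W < ⊤ := Submodule.lt_top_of_finrank_lt_finrank (by omega)
  obtain ⟨g, hg, hle⟩ := W.exists_le_ker_of_lt_top hlt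
  have hker := Module.Dual.finrank_ker_add_one_of_ne_zero hg
  exact ⟨g, hg, Submodule.eq_of_le_of_finrank_eq hle (by omega)⟩

section Coordinates

/-- `v` is a vector of homogeneous coordinates of `p` after the change of coordinates `N`. The
representative of a point is only determined up to a nonzero scalar, so coordinates are too. -/
def HasCoords (N : Matrix (Fin n) (Fin n) K) (p : PP K n) (v : Fin n → K) : Prop :=
  ∃ c : K, c ≠ 0 ∧ N *ᵥ p.rep = c • v

variable {N : Matrix (Fin n) (Fin n) K} {p p' : PP K n} {v w : Fin n → K}

lemma hasCoords_mulVec_rep (N : Matrix (Fin n) (Fin n) K) (p : PP K n) :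
    HasCoords N p (N *ᵥ p.rep) :=
  ⟨1, one_ne_zero, (one_smul K _).symm⟩

lemma hasCoords_smul_iff {c : K} (hc : c ≠ 0) : HasCoords N p (c • v) ↔ HasCoords N p v := by
  constructor
  · rintro ⟨d, hd, h⟩
    exact ⟨d * c, mul_ne_zero hd hc, by rw [h, smul_smul]⟩
  · rintro ⟨d, hd, h⟩
    exact ⟨d / c, div_ne_zero hd hc, by rw [h, smul_smul, div_mul_cancel₀ _ hc]⟩

lemma HasCoords.exists_eq_smul (hv : HasCoords N p v) (hw : HasCoords N p w) :
    ∃ c : K, c ≠ 0 ∧ v = c • w := by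
  obtain ⟨a, ha, h⟩ := hv
  obtain ⟨b, hb, h'⟩ := hw
  refine ⟨b / a, div_ne_zero hb ha, ?_⟩
  rw [eq_comm, div_eq_inv_mul, mul_smul, ← h', h, inv_smul_smul₀ ha]

lemma hasCoords_mul_mulVec_iff {D : Matrix (Fin n) (Fin n) K} (hD : IsUnit D.det) :
    HasCoords (D * N) p (D *ᵥ v) ↔ HasCoords N p v := by
  simp only [HasCoords, ← mulVec_mulVec, ← mulVec_smul, (mulVec_inj D hD).eq_iff]

lemma HasCoords.ne_zero (hN : IsUnit N.det) (h : HasCoords N p v) : v ≠ 0 := by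
  rintro rfl
  obtain ⟨c, -, h⟩ := h
  exact p.rep_nonzero (mulVec_inj N hN (by rw [h, smul_zero, mulVec_zero]))

lemma mem_projPt_iff : p ∈ projPt v ↔ ∃ c : K, c ≠ 0 ∧ p.rep = c • v := by
  constructor
  · rintro ⟨h, rfl⟩
    obtain ⟨a, ha⟩ := Projectivization.exists_smul_eq_mk_rep K v h
    exact ⟨a, a.ne_zero, ha.symm⟩
  · rintro ⟨c, -, h⟩
    have hv : v ≠ 0 := by
      rintro rfl
      exact p.rep_nonzero (by rw [h, smul_zero])
    refine ⟨hv, ?_⟩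
    conv_lhs => rw [← p.mk_rep]
    exact (Projectivization.mk_eq_mk_iff' K _ _ p.rep_nonzero hv).2 ⟨c, h.symm⟩

lemma mem_projPt_iff_hasCoords (hN : IsUnit N.det) :
    p ∈ projPt v ↔ HasCoords N p (N *ᵥ v) := by
  simp only [mem_projPt_iff, HasCoords, ← mulVec_smul, (mulVec_inj N hN).eq_iff]

lemma mem_mimg_iff (hN : IsUnit N.det) (M : Matrix (Fin n) (Fin m) K) (S : Set (Fin m → K)) :
    p ∈ mimg M S ↔ ∃ v ∈ S, HasCoords N p ((N * M) *ᵥ v) := by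
  simp only [mimg, Set.mem_ofPred_eq, mem_projPt_iff_hasCoords hN, mulVec_mulVec]

lemma mem_mimg_inv_mul_iff (hN : IsUnit N.det) (C : Matrix (Fin n) (Fin m) K)
    (S : Set (Fin m → K)) : p ∈ mimg (N⁻¹ * C) S ↔ ∃ v ∈ S, HasCoords N p (C *ᵥ v) := by
  simp only [mem_mimg_iff hN, mul_nonsing_inv_cancel_left N C hN]

lemma HasCoords.eq (hN : IsUnit N.det) (h : HasCoords N p v) (h' : HasCoords N p' v) :
    p = p' := by
  have hv : v = N *ᵥ (N⁻¹ *ᵥ v) := by rw [mulVec_mulVec, mul_nonsing_inv N hN, one_mulVec]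
  rw [hv, ← mem_projPt_iff_hasCoords hN] at h h'
  obtain ⟨_, rfl⟩ := h
  obtain ⟨_, rfl⟩ := h'
  rfl

lemma exists_hasCoords (hN : IsUnit N.det) (hv : v ≠ 0) : ∃ p, HasCoords N p v := by
  have hN' : IsUnit N⁻¹.det := isUnit_nonsing_inv_det_iff.2 hN
  have hv' : N⁻¹ *ᵥ v ≠ 0 := fun h ↦ hv (mulVec_inj N⁻¹ hN' (by rw [h, mulVec_zero]))
  refine ⟨Projectivization.mk K _ hv', ?_⟩
  have h := (mem_projPt_iff_hasCoords hN).1 ⟨hv', rfl⟩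
  rwa [mulVec_mulVec, mul_nonsing_inv N hN, one_mulVec] at h

lemma mem_lineTh_iff (hN : IsUnit N.det) {P X : PP K n} {x y : Fin n → K}
    (hp : HasCoords N p v) (hP : HasCoords N P x) (hX : HasCoords N X y) :
    p ∈ lineTh P X ↔ ∃ a b : K, v = a • x + b • y := by
  obtain ⟨c, hc, hp⟩ := hp
  obtain ⟨d, hd, hP⟩ := hP
  obtain ⟨e, he, hX⟩ := hX
  have hrep (a b : K) :
      a • P.rep + b • X.rep = p.rep ↔ a • d • x + b • e • y = c • v := by
    rw [← (mulVec_inj N hN).eq_iff, mulVec_add, mulVec_smul, mulVec_smul, hp, hP, hX]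
  simp only [lineTh, ptsOf, Set.mem_ofPred_eq, Submodule.mem_span_pair, hrep]
  constructor
  · rintro ⟨a, b, h⟩
    refine ⟨c⁻¹ * a * d, c⁻¹ * b * e, ?_⟩
    rw [← inv_smul_smul₀ hc v, ← h]
    module
  · rintro ⟨a, b, rfl⟩
    refine ⟨c * a / d, c * b / e, ?_⟩
    rw [smul_smul, smul_smul, div_mul_cancel₀ _ hd, div_mul_cancel₀ _ he]
    module

lemma HasCoords.dotProduct_eq_zero_iff (hp : HasCoords N p v) (a : Fin n → K) :
    a ⬝ᵥ N *ᵥ p.rep = 0 ↔ a ⬝ᵥ v = 0 := by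
  obtain ⟨c, hc, h⟩ := hp
  rw [h, dotProduct_smul, smul_eq_zero_iff_right hc]

lemma isFlat_iff_exists_dotProduct (hN : IsUnit N.det) {d : ℕ} (hd : d + 2 = n)
    {X : Set (PP K n)} :
    IsFlat d X ↔ ∃ a : Fin n → K, a ≠ 0 ∧ X = {p | a ⬝ᵥ N *ᵥ p.rep = 0} := by
  constructor
  · rintro ⟨W, hW, rfl⟩
    obtain ⟨g, hg, rfl⟩ := exists_ker_eq_of_finrank_add_one (W := W)
      (by rw [hW, Module.finrank_fin_fun, ← hd])
    obtain ⟨b, rfl⟩ := (dotProductEquiv K (Fin n)).surjective g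
    refine ⟨b ᵥ* N⁻¹, ?_, ?_⟩
    · intro h
      apply hg
      rw [← vecMul_one b, ← nonsing_inv_mul N hN, ← vecMul_vecMul, h, zero_vecMul, map_zero]
    · ext p
      simp [ptsOf, dotProduct_mulVec, vecMul_vecMul, nonsing_inv_mul N hN]
  · rintro ⟨a, ha, rfl⟩
    have haN : dotProductEquiv K (Fin n) (a ᵥ* N) ≠ 0 := by
      rw [Ne, map_eq_zero_iff _ (LinearEquiv.injective _)]
      intro h
      apply ha
      rw [← vecMul_one a, ← mul_nonsing_inv N hN, ← vecMul_vecMul, h, zero_vecMul]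
    refine ⟨(dotProductEquiv K (Fin n) (a ᵥ* N)).ker, ?_, ?_⟩
    · have hker := Module.Dual.finrank_ker_add_one_of_ne_zero haN
      rw [Module.finrank_fin_fun] at hker
      omega
    · ext p
      simp [ptsOf, dotProduct_mulVec]

end Coordinates

section AffineLines

variable (F : Type*) {V : Type*} [Field F] [AddCommGroup V] [Module F V]

/-- `A` is an affine line of the `F`-vector space `V`, as a bare set of vectors. -/
def IsAffineLine (A : Set V) : Prop :=
  ∃ a b : V, a ≠ 0 ∧ A = Set.range fun θ : F ↦ b + θ • a

variable {F} {A : Set V}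

lemma isAffineLine_span_singleton {a : V} (ha : a ≠ 0) : IsAffineLine F (F ∙ a : Set V) :=
  ⟨a, 0, ha, by simp [Submodule.span_singleton_eq_range]⟩

lemma IsAffineLine.eq_span_singleton (hA : IsAffineLine F A) (h0 : 0 ∈ A) {x : V} (hx : x ∈ A)
    (hx0 : x ≠ 0) : A = F ∙ x := by
  obtain ⟨a, b, -, rfl⟩ := hA
  obtain ⟨s, hs : b + s • a = 0⟩ := h0
  obtain ⟨t, rfl : b + t • a = x⟩ := hx
  obtain rfl : b = -(s • a) := eq_neg_of_add_eq_zero_left hs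
  have hst : t - s ≠ 0 := by
    intro h
    exact hx0 (by rw [sub_eq_zero.1 h, neg_add_cancel])
  ext y
  simp only [Set.mem_range, SetLike.mem_coe, Submodule.mem_span_singleton]
  constructor
  · rintro ⟨θ, rfl⟩
    refine ⟨(θ - s) / (t - s), ?_⟩
    rw [neg_add_eq_sub, neg_add_eq_sub, ← sub_smul, ← sub_smul, smul_smul, div_mul_cancel₀ _ hst]
  · rintro ⟨θ, rfl⟩
    exact ⟨s + θ * (t - s), by module⟩

lemma IsAffineLine.exists_eq_span_singleton (hA : IsAffineLine F A) (h0 : 0 ∈ A) :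
    ∃ a : V, a ≠ 0 ∧ A = F ∙ a := by
  obtain ⟨a, b, ha, hab⟩ := id hA
  have hb : b ∈ A := hab ▸ ⟨0, by simp⟩
  have hba : b + a ∈ A := hab ▸ ⟨1, by simp⟩
  by_cases hb0 : b = 0
  · subst hb0
    rw [zero_add] at hba
    exact ⟨a, ha, hA.eq_span_singleton h0 hba ha⟩
  · exact ⟨b, hb0, hA.eq_span_singleton h0 hb hb0⟩

lemma setOf_isAffineLine_zero_mem :
    {A : Set V | IsAffineLine F A ∧ 0 ∈ A} =
      Set.range fun l : Projectivization F V ↦ (l.submodule : Set V) := by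
  ext A
  constructor
  · rintro ⟨hA, h0⟩
    obtain ⟨a, ha, rfl⟩ := hA.exists_eq_span_singleton h0
    exact ⟨Projectivization.mk F a ha, by simp only [Projectivization.submodule_mk]⟩
  · rintro ⟨l, rfl⟩
    simp only [l.submodule_eq]
    exact ⟨isAffineLine_span_singleton l.rep_nonzero, Submodule.zero_mem _⟩

lemma ncard_isAffineLine_zero_mem [Finite F] (hV : Module.finrank F V = 2) :
    {A : Set V | IsAffineLine F A ∧ 0 ∈ A}.ncard = Nat.card F + 1 := by
  rw [setOf_isAffineLine_zero_mem, Set.ncard_range_of_injective,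
    Projectivization.card_of_finrank_two F V hV]
  exact SetLike.coe_injective.comp Projectivization.submodule_injective

lemma setOf_eq_one_eq_range {g : Module.Dual F V} {a b : V} (hga : g.ker = F ∙ a)
    (hgb : g b = 1) : {x | g x = 1} = Set.range fun θ : F ↦ b + θ • a := by
  ext x
  have hx : g x = 1 ↔ x - b ∈ F ∙ a := by
    rw [← hga, LinearMap.mem_ker, map_sub, hgb, sub_eq_zero]
  rw [Set.mem_ofPred_eq, hx, Submodule.mem_span_singleton, Set.mem_range]
  simp only [eq_sub_iff_add_eq']

lemma isAffineLine_setOf_eq_one (hV : Module.finrank F V = 2) {g : Module.Dual F V} (hg : g ≠ 0) :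
    IsAffineLine F {x | g x = 1} := by
  have : FiniteDimensional F V := Module.finite_of_finrank_eq_succ hV
  have hker : Module.finrank F g.ker = 1 := by
    have := Module.Dual.finrank_ker_add_one_of_ne_zero hg
    omega
  obtain ⟨⟨a, hag⟩, ha, hspan⟩ := finrank_eq_one_iff'.1 hker
  obtain ⟨b, hb⟩ := LinearMap.surjective_of_ne_zero hg 1
  refine ⟨a, b, fun h ↦ ha (Subtype.ext h), setOf_eq_one_eq_range ?_ hb⟩
  refine le_antisymm (fun x hx ↦ ?_) ((Submodule.span_singleton_le_iff_mem a _).2 hag)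
  obtain ⟨c, hc⟩ := hspan ⟨x, hx⟩
  exact Submodule.mem_span_singleton.2 ⟨c, congrArg Subtype.val hc⟩

lemma setOf_isAffineLine_zero_notMem (hV : Module.finrank F V = 2) :
    {A : Set V | IsAffineLine F A ∧ 0 ∉ A} =
      (fun g : Module.Dual F V ↦ {x | g x = 1}) '' {0}ᶜ := by
  have : FiniteDimensional F V := Module.finite_of_finrank_eq_succ hV
  ext A
  constructor
  · rintro ⟨⟨a, b, ha, rfl⟩, h0⟩
    obtain ⟨g, hg, hga⟩ := exists_ker_eq_of_finrank_add_one (W := F ∙ a)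
      (by rw [finrank_span_singleton ha, hV])
    have hgb : g b ≠ 0 := by
      intro hb
      obtain ⟨s, rfl⟩ := Submodule.mem_span_singleton.1 (hga ▸ LinearMap.mem_ker.2 hb)
      exact h0 ⟨-s, by simp⟩
    refine ⟨(g b)⁻¹ • g, smul_ne_zero (inv_ne_zero hgb) hg, setOf_eq_one_eq_range ?_ ?_⟩
    · rw [LinearMap.ker_smul _ _ (inv_ne_zero hgb), hga]
    · exact inv_mul_cancel₀ hgb
  · rintro ⟨g, hg, rfl⟩
    exact ⟨isAffineLine_setOf_eq_one hV hg, by simp⟩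

lemma dual_eq_of_setOf_eq_one_eq {g h : Module.Dual F V} (hg : g ≠ 0)
    (hgh : {x | g x = 1} = {x | h x = 1}) : g = h := by
  have hiff (x : V) : g x = 1 ↔ h x = 1 := Set.ext_iff.1 hgh x
  obtain ⟨u, hu⟩ : ∃ u, g u = 1 := LinearMap.surjective_of_ne_zero hg 1
  ext x
  by_cases hx : g x = 0
  · have : h (u + x) = 1 := (hiff _).1 (by rw [map_add, hu, hx, add_zero])
    rw [map_add, (hiff u).1 hu] at this
    rw [hx, left_eq_add.1 this.symm]
  · have : h ((g x)⁻¹ • x) = 1 := (hiff _).1 (by rw [map_smul, smul_eq_mul, inv_mul_cancel₀ hx])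
    rw [map_smul, smul_eq_mul, inv_mul_eq_one₀ hx] at this
    exact this

lemma ncard_isAffineLine_zero_notMem [Finite F] (hV : Module.finrank F V = 2) :
    {A : Set V | IsAffineLine F A ∧ 0 ∉ A}.ncard = Nat.card F ^ 2 - 1 := by
  have : FiniteDimensional F V := Module.finite_of_finrank_eq_succ hV
  have : Finite (Module.Dual F V) := Module.finite_of_finite F
  have hinj : Set.InjOn (fun g : Module.Dual F V ↦ {x | g x = 1}) {0}ᶜ :=
    fun g hg h _ hgh ↦ dual_eq_of_setOf_eq_one_eq hg hgh
  rw [setOf_isAffineLine_zero_notMem hV, hinj.ncard_image, Set.ncard_compl, Set.ncard_singleton,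
    Module.natCard_eq_pow_finrank (K := F), Subspace.dual_finrank_eq, hV]

end AffineLines

section Conjugation

lemma exists_conjugation {F K : Type*} [Field F] [Field K] [Algebra F K] [IsGalois F K]
    (h : Module.finrank F K = 2) :
    ∃ σ : K ≃ₐ[F] K, Function.Involutive σ ∧
      ∀ x, σ x = x → x ∈ Set.range (algebraMap F K) := by
  have : FiniteDimensional F K := Module.finite_of_finrank_eq_succ h
  have hcard : Nat.card (K ≃ₐ[F] K) = 2 := by rw [IsGalois.card_aut_eq_finrank, h]
  obtain ⟨σ, hσ, hσ'⟩ := (Nat.card_eq_two_iff' (1 : K ≃ₐ[F] K)).1 hcard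
  refine ⟨σ, fun x ↦ ?_, fun x hx ↦ ?_⟩
  · have hinv : σ⁻¹ = σ := hσ' _ (inv_ne_one.2 hσ)
    exact (congrArg (· (σ x)) hinv).symm.trans (σ.symm_apply_apply x)
  · refine IntermediateField.mem_bot.1 ((IsGalois.mem_bot_iff_fixed x).2 fun f ↦ ?_)
    obtain rfl | hf := eq_or_ne f 1
    · rfl
    · rw [hσ' f hf, hx]

lemma finrank_eq_of_card_eq_card_pow {F V : Type*} [DivisionRing F] [AddCommGroup V]
    [Module F V] [Fintype F] [Fintype V] {d : ℕ} (h : Fintype.card V = Fintype.card F ^ d) :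
    Module.finrank F V = d :=
  Nat.pow_right_injective Fintype.one_lt_card (Module.card_eq_pow_finrank.symm.trans h)

end Conjugation

section BaerModel

variable {F : Type} [Field F] [Algebra F K]

/-- The model of a Baer subplane adapted to a tangent line: the points `(f, w, σ w)` with `f` in
`F` and `w` in `K`, where `σ` is the conjugation of `K` over `F`. The line on which the middle
coordinate vanishes meets it in `(1, 0, 0)` only. -/
def baerMap (σ : K ≃ₐ[F] K) : F × K →ₗ[F] (Fin 3 → K) where
  toFun u := ![algebraMap F K u.1, u.2, σ u.2]
  map_add' u v := by simp
  map_smul' c u := by ext i; fin_cases i <;> simp [Algebra.smul_def]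

/-- The points represented, in the coordinates given by `N`, by the image under `baerMap` of a
vector of `U`. For `U = ⊤` this is a Baer subplane, for `U` of rank two one of its lines. -/
def baerPoints (N : Matrix (Fin 3) (Fin 3) K) (σ : K ≃ₐ[F] K) (U : Submodule F (F × K)) :
    Set (PP K 3) :=
  {p | ∃ u ∈ U, HasCoords N p (baerMap σ u)}

variable {σ : K ≃ₐ[F] K} {N : Matrix (Fin 3) (Fin 3) K}

lemma baerMap_apply (u : F × K) : baerMap σ u = ![algebraMap F K u.1, u.2, σ u.2] := rfl

lemma baerMap_injective (σ : K ≃ₐ[F] K) : Function.Injective (baerMap σ) := by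
  intro u v h
  exact Prod.ext ((algebraMap F K).injective (congrFun h 0)) (congrFun h 1)

lemma exists_eq_smul_of_baerMap_eq_smul
    (hfix : ∀ x, σ x = x → x ∈ Set.range (algebraMap F K)) {u v : F × K} (hv : v ≠ 0) {c : K}
    (h : baerMap σ u = c • baerMap σ v) : ∃ r : F, u = r • v := by
  have h0 : algebraMap F K u.1 = c * algebraMap F K v.1 := congrFun h 0
  have h1 : u.2 = c * v.2 := congrFun h 1
  have h2 : σ u.2 = c * σ v.2 := congrFun h 2
  have hc : σ c = c := by
    by_cases hv1 : v.1 = 0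
    · have hv2 : v.2 ≠ 0 := fun hv2 ↦ hv (Prod.ext hv1 hv2)
      rw [h1, map_mul] at h2
      exact mul_right_cancel₀ ((map_ne_zero σ).2 hv2) h2
    · have h0' := congrArg σ h0
      rw [map_mul, σ.commutes, σ.commutes, h0] at h0'
      exact mul_right_cancel₀ ((map_ne_zero _).2 hv1) h0'.symm
  obtain ⟨r, rfl⟩ := hfix c hc
  exact ⟨r, baerMap_injective σ (by rw [h, map_smul, algebraMap_smul])⟩

lemma HasCoords.of_baerMap_smul (hN : IsUnit N.det) {p : PP K 3} {r : F} {u : F × K}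
    (h : HasCoords N p (baerMap σ (r • u))) : HasCoords N p (baerMap σ u) := by
  have hr : algebraMap F K r ≠ 0 := by
    intro hr
    refine h.ne_zero hN ?_
    rw [(map_eq_zero _).1 hr, zero_smul, map_zero]
  rwa [map_smul, ← algebraMap_smul K, hasCoords_smul_iff hr] at h

lemma HasCoords.of_baerMap_fst (hN : IsUnit N.det) {p : PP K 3} {f : F}
    (h : HasCoords N p (baerMap σ (f, 0))) : HasCoords N p ![1, 0, 0] := by
  have hf : ((f, 0) : F × K) = f • (1, 0) := by simp
  rw [hf] at h
  simpa [baerMap_apply] using h.of_baerMap_smul hN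

lemma subsingleton_baerPoints_span_singleton (hN : IsUnit N.det) (u : F × K) :
    (baerPoints N σ (F ∙ u)).Subsingleton := by
  have hcoords {p : PP K 3} (hp : p ∈ baerPoints N σ (F ∙ u)) : HasCoords N p (baerMap σ u) := by
    obtain ⟨_, hv, hp⟩ := hp
    obtain ⟨r, rfl⟩ := Submodule.mem_span_singleton.1 hv
    exact hp.of_baerMap_smul hN
  exact fun p hp p' hp' ↦ (hcoords hp).eq hN (hcoords hp')

lemma ncard_baerPoints (hfix : ∀ x, σ x = x → x ∈ Set.range (algebraMap F K))
    (hN : IsUnit N.det) (U : Submodule F (F × K)) :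
    (baerPoints N σ U).ncard = Nat.card (Projectivization F U) := by
  have hne (l : Projectivization F U) : baerMap σ l.rep ≠ 0 := by
    rw [Ne, map_eq_zero_iff _ (baerMap_injective σ), ZeroMemClass.coe_eq_zero]
    exact l.rep_nonzero
  choose pt hpt using fun l ↦ exists_hasCoords hN (hne l)
  have hpt_inj : Function.Injective pt := by
    intro l l' h
    obtain ⟨c, -, hc⟩ := (hpt l).exists_eq_smul (h ▸ hpt l')
    obtain ⟨r, hr⟩ := exists_eq_smul_of_baerMap_eq_smul hfix
      (ZeroMemClass.coe_eq_zero.not.2 l'.rep_nonzero) hc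
    rw [← l.mk_rep, ← l'.mk_rep]
    exact (Projectivization.mk_eq_mk_iff' F _ _ l.rep_nonzero l'.rep_nonzero).2
      ⟨r, (Subtype.ext hr).symm⟩
  have hrange : baerPoints N σ U = Set.range pt := by
    ext p
    constructor
    · rintro ⟨u, hu, hp⟩
      have hu0 : (⟨u, hu⟩ : U) ≠ 0 := by
        intro h
        obtain rfl : u = 0 := congrArg Subtype.val h
        exact hp.ne_zero hN (map_zero _)
      obtain ⟨r, hr⟩ := Projectivization.exists_smul_eq_mk_rep F (⟨u, hu⟩ : U) hu0
      refine ⟨Projectivization.mk F _ hu0, (hpt _).eq hN ?_⟩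
      rw [← hr, Units.smul_def, Submodule.coe_smul, map_smul, ← algebraMap_smul K,
        hasCoords_smul_iff ((map_ne_zero _).2 r.ne_zero)]
      exact hp
    · rintro ⟨l, rfl⟩
      exact ⟨l.rep, l.rep.2, hpt l⟩
  rw [hrange, Set.ncard_range_of_injective hpt_inj]

lemma ncard_baerPoints_of_finrank_eq_two [Finite F]
    (hfix : ∀ x, σ x = x → x ∈ Set.range (algebraMap F K)) (hN : IsUnit N.det)
    {U : Submodule F (F × K)} (hU : Module.finrank F U = 2) :
    (baerPoints N σ U).ncard = Nat.card F + 1 := by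
  rw [ncard_baerPoints hfix hN, Projectivization.card_of_finrank_two F U hU]

end BaerModel

section Frame

variable {F : Type} [Field F] [Algebra F K] {σ : K ≃ₐ[F] K} {N M : Matrix (Fin 3) (Fin 3) K}
  {p P T : PP K 3} {v : Fin 3 → K}

lemma span_range_baerMap {τ : K} (hτ : σ τ ≠ τ) :
    Submodule.span K (Set.range (baerMap σ)) = ⊤ := by
  refine Submodule.eq_top_iff'.2 fun v ↦ ?_
  have hτ' : σ τ - τ ≠ 0 := sub_ne_zero.2 hτ
  have hv : v = v 0 • baerMap σ (1, 0) +
      ((v 1 * σ τ - v 2 * τ) / (σ τ - τ)) • baerMap σ (0, 1) +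
      ((v 2 - v 1) / (σ τ - τ)) • baerMap σ (0, τ) := by
    ext i
    fin_cases i <;> simp [baerMap_apply] <;> field_simp <;> ring
  rw [hv]
  have hmem (u : F × K) : baerMap σ u ∈ Submodule.span K (Set.range (baerMap σ)) :=
    Submodule.subset_span ⟨u, rfl⟩
  exact add_mem (add_mem (Submodule.smul_mem _ _ (hmem _)) (Submodule.smul_mem _ _ (hmem _)))
    (Submodule.smul_mem _ _ (hmem _))

lemma exists_linearEquiv_snd_eq {k V W : Type*} [Field k] [AddCommGroup V] [Module k V]
    [AddCommGroup W] [Module k W] [FiniteDimensional k W]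
    (h : Module.finrank k V = 1 + Module.finrank k W) (l : V →ₗ[k] W) {e : V} (he : e ≠ 0)
    (hl : l.ker ≤ k ∙ e) : ∃ Φ : V ≃ₗ[k] k × W, ∀ v, (Φ v).2 = l v := by
  have : FiniteDimensional k V := .of_finrank_pos (by omega)
  obtain ⟨g, hg⟩ := not_forall.1 ((Module.forall_dual_apply_eq_zero_iff k e).not.2 he)
  have hinj : Function.Injective (g.prod l) := by
    refine (injective_iff_map_eq_zero _).2 fun v hv ↦ ?_
    obtain ⟨hgv : g v = 0, hlv : l v = 0⟩ := Prod.ext_iff.1 hv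
    obtain ⟨r, rfl⟩ := Submodule.mem_span_singleton.1 (hl hlv)
    rw [map_smul, smul_eq_mul] at hgv
    rw [(mul_eq_zero.1 hgv).resolve_right hg, zero_smul]
  exact ⟨.ofInjectiveOfFinrankEq _ hinj (by simp [h]), fun v ↦ rfl⟩

lemma exists_mulVec_algVec_eq (f : (Fin n → F) →ₗ[F] (Fin m → K)) :
    ∃ D : Matrix (Fin m) (Fin n) K, ∀ u, D *ᵥ algVec F u = f u := by
  refine ⟨.of fun i j ↦ f (fun k ↦ if j = k then 1 else 0) i, fun u ↦ ?_⟩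
  ext i
  rw [f.pi_apply_eq_sum_univ u]
  simp [mulVec, dotProduct, algVec, Algebra.smul_def, mul_comm]

lemma dotProduct_eq_of_algVec {a b : Fin n → K}
    (h : ∀ u : Fin n → F, a ⬝ᵥ algVec F u = b ⬝ᵥ algVec F u) : a = b := by
  ext j
  have hj : algVec F (Pi.single j (1 : F)) = Pi.single j (1 : K) := by
    ext i
    simp [algVec, Pi.single_apply, apply_ite]
  simpa [hj] using h (Pi.single j 1)

lemma isUnit_det_of_forall_mulVec_algVec {τ : K} (hτ : σ τ ≠ τ) (Φ : (Fin 3 → F) ≃ₗ[F] F × K)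
    {D : Matrix (Fin 3) (Fin 3) K} (hD : ∀ u, D *ᵥ algVec F u = baerMap σ (Φ u)) :
    IsUnit D.det := by
  rw [← isUnit_iff_isUnit_det, ← mulVec_surjective_iff_isUnit, ← coe_mulVecLin,
    ← LinearMap.range_eq_top, eq_top_iff, ← span_range_baerMap hτ, Submodule.span_le]
  rintro _ ⟨u, rfl⟩
  exact ⟨algVec F (Φ.symm u), by rw [mulVecLin_apply, hD, Φ.apply_symm_apply]⟩

/-- A change of coordinates turning the line at infinity into the line on which the middle
coordinate vanishes, as in the model `baerMap`. -/
structure IsLinfFrame (N : Matrix (Fin 3) (Fin 3) K) : Prop where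
  isUnit_det : IsUnit N.det
  mulVec_one : ∀ v, (N *ᵥ v) 1 = v 2

lemma IsLinfFrame.mem_linf_iff (hN : IsLinfFrame N) (hp : HasCoords N p v) :
    p ∈ linf K ↔ v 1 = 0 := by
  obtain ⟨c, hc, h⟩ := hp
  rw [linf, Set.mem_ofPred_eq, ← hN.mulVec_one p.rep, h, Pi.smul_apply, smul_eq_zero_iff_right hc]

lemma IsLinfFrame.hasCoords_of_mem_baerPoints (hN : IsLinfFrame N)
    (hT : T ∈ baerPoints N σ ⊤) (hT' : T ∈ linf K) : HasCoords N T ![1, 0, 0] := by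
  obtain ⟨⟨f, w⟩, -, hu⟩ := hT
  obtain rfl : w = 0 := (hN.mem_linf_iff hu).1 hT'
  exact hu.of_baerMap_fst hN.isUnit_det

lemma mem_span_singleton_of_algVec_eq_smul {u e : Fin n → F} (he : e ≠ 0) {c : K}
    (h : (algVec F u : Fin n → K) = c • algVec F e) : u ∈ F ∙ e := by
  obtain ⟨i, hi : e i ≠ 0⟩ := Function.ne_iff.1 he
  have hij (j : Fin n) : algebraMap F K (u j) = c * algebraMap F K (e j) := congrFun h j
  have hc : c = algebraMap F K (u i / e i) := by
    rw [map_div₀, hij i, mul_div_cancel_right₀ _ ((map_ne_zero _).2 hi)]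
  refine Submodule.mem_span_singleton.2 ⟨u i / e i, funext fun j ↦ (algebraMap F K).injective ?_⟩
  rw [hij j, hc, Pi.smul_apply, smul_eq_mul, map_mul]

lemma mem_mimg_subplaneVecs_iff (hM : IsUnit M.det) :
    p ∈ mimg M (subplaneVecs F K) ↔ ∃ u : Fin 3 → F, u ≠ 0 ∧ HasCoords M⁻¹ p (algVec F u) := by
  simp [mem_mimg_iff (isUnit_nonsing_inv_det_iff.2 hM), nonsing_inv_mul M hM, subplaneVecs]

lemma exists_mem_span_singleton_of_inter_linf_eq (hM : IsUnit M.det)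
    (hT : mimg M (subplaneVecs F K) ∩ linf K = {T}) :
    ∃ e : Fin 3 → F, e ≠ 0 ∧ ∀ u, (M *ᵥ algVec F u) 2 = 0 → u ∈ F ∙ e := by
  have hM' : IsUnit M⁻¹.det := isUnit_nonsing_inv_det_iff.2 hM
  have hlinf {p : PP K 3} {x : Fin 3 → K} (hp : HasCoords M⁻¹ p x) :
      p ∈ linf K ↔ (M *ᵥ x) 2 = 0 := by
    obtain ⟨c, hc, h⟩ := hp
    have hrep : p.rep = c • M *ᵥ x := by
      rw [← mulVec_smul, ← h, mulVec_mulVec, mul_nonsing_inv M hM, one_mulVec]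
    rw [linf, Set.mem_ofPred_eq, hrep, Pi.smul_apply, smul_eq_zero_iff_right hc]
  obtain ⟨e, he, hTe⟩ := (mem_mimg_subplaneVecs_iff hM).1 (hT.ge rfl).1
  refine ⟨e, he, fun u hu ↦ ?_⟩
  obtain rfl | hu0 := eq_or_ne u 0
  · exact zero_mem _
  have hu0' : algVec F u ≠ (0 : Fin 3 → K) := by
    intro h
    exact hu0 (funext fun i ↦ (map_eq_zero (algebraMap F K)).1 (congrFun h i))
  obtain ⟨p, hp⟩ := exists_hasCoords hM' hu0'
  obtain rfl : p = T := hT.le ⟨(mem_mimg_subplaneVecs_iff hM).2 ⟨u, hu0, hp⟩, (hlinf hp).2 hu⟩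
  obtain ⟨c, -, hc⟩ := hp.exists_eq_smul hTe
  exact mem_span_singleton_of_algVec_eq_smul he hc

lemma exists_isLinfFrame (hFK : Module.finrank F K = 2) {τ : K} (hτ : σ τ ≠ τ)
    {B : Set (PP K 3)} (hB : IsBaerSubplane F B) (hT : B ∩ linf K = {T}) :
    ∃ N, IsLinfFrame N ∧ B = baerPoints N σ ⊤ := by
  have : FiniteDimensional F K := Module.finite_of_finrank_eq_succ hFK
  obtain ⟨M, hM, rfl⟩ := hB
  obtain ⟨e, he, hker⟩ := exists_mem_span_singleton_of_inter_linf_eq hM hT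
  let l : (Fin 3 → F) →ₗ[F] K :=
    (LinearMap.proj 2 ∘ₗ M.mulVecLin).restrictScalars F ∘ₗ
      (Algebra.linearMap F K).compLeft (Fin 3)
  obtain ⟨Φ, hΦ⟩ := exists_linearEquiv_snd_eq (by simp [hFK]) l he hker
  obtain ⟨D, hD⟩ := exists_mulVec_algVec_eq (baerMap σ ∘ₗ Φ.toLinearMap)
  have hD' : IsUnit D.det := isUnit_det_of_forall_mulVec_algVec hτ Φ hD
  have hrow : D 1 = M 2 := dotProduct_eq_of_algVec fun u ↦ (congrFun (hD u) 1).trans (hΦ u)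
  refine ⟨D * M⁻¹, ⟨?_, fun v ↦ ?_⟩, ?_⟩
  · rw [det_mul]
    exact hD'.mul (isUnit_nonsing_inv_det_iff.2 hM)
  · calc ((D * M⁻¹) *ᵥ v) 1 = M 2 ⬝ᵥ M⁻¹ *ᵥ v := by rw [← mulVec_mulVec, mulVec, hrow]
      _ = (M *ᵥ M⁻¹ *ᵥ v) 2 := rfl
      _ = v 2 := by rw [mulVec_mulVec, mul_nonsing_inv M hM, one_mulVec]
  · ext p
    rw [mem_mimg_subplaneVecs_iff hM]
    constructor
    · rintro ⟨u, -, hp⟩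
      exact ⟨Φ u, Submodule.mem_top, (hD u) ▸ (hasCoords_mul_mulVec_iff hD').2 hp⟩
    · rintro ⟨w, -, hp⟩
      have hw : baerMap σ w = D *ᵥ algVec F (Φ.symm w) := by simp [hD]
      rw [hw, hasCoords_mul_mulVec_iff hD'] at hp
      refine ⟨Φ.symm w, fun h ↦ hp.ne_zero (isUnit_nonsing_inv_det_iff.2 hM) ?_, hp⟩
      simp [h, algVec, funext_iff]

/-- The matrix adding `a` times the middle and `b` times the last coordinate to the first one. It is
used to move the vertex of the pencils to `(0, 0, 1)`. -/
def shear (a b : K) : Matrix (Fin 3) (Fin 3) K := !![1, a, b; 0, 1, 0; 0, 0, 1]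

lemma isUnit_det_shear (a b : K) : IsUnit (shear a b).det := by simp [shear, det_fin_three]

lemma shear_mulVec (a b : K) (v : Fin 3 → K) :
    shear a b *ᵥ v = ![v 0 + a * v 1 + b * v 2, v 1, v 2] := by
  ext i
  fin_cases i <;> simp [shear, mulVec, dotProduct, Fin.sum_univ_three]

lemma IsLinfFrame.shear_mul (hN : IsLinfFrame N) (a b : K) : IsLinfFrame (shear a b * N) where
  isUnit_det := by
    rw [det_mul]
    exact (isUnit_det_shear a b).mul hN.isUnit_det
  mulVec_one v := by
    rw [← mulVec_mulVec, shear_mulVec]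
    exact hN.mulVec_one v

lemma exists_shear_mulVec_baerMap (hσ : Function.Involutive σ)
    (hfix : ∀ x, σ x = x → x ∈ Set.range (algebraMap F K)) (c w : K) :
    ∃ r : F, ∀ f, shear c (σ c) *ᵥ baerMap σ (f, w) = baerMap σ (f + r, w) := by
  obtain ⟨r, hr⟩ := hfix (c * w + σ c * σ w) (by simp [hσ c, hσ w, add_comm])
  exact ⟨r, fun f ↦ by simp [shear_mulVec, baerMap_apply, hr, add_assoc]⟩

lemma baerPoints_shear_mul (hσ : Function.Involutive σ)
    (hfix : ∀ x, σ x = x → x ∈ Set.range (algebraMap F K)) (c : K) :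
    baerPoints (shear c (σ c) * N) σ ⊤ = baerPoints N σ ⊤ := by
  ext p
  constructor
  · rintro ⟨⟨f, w⟩, -, hp⟩
    obtain ⟨r, hr⟩ := exists_shear_mulVec_baerMap hσ hfix c w
    refine ⟨(f - r, w), Submodule.mem_top, ?_⟩
    rwa [← hasCoords_mul_mulVec_iff (isUnit_det_shear c (σ c)), hr, sub_add_cancel]
  · rintro ⟨⟨f, w⟩, -, hp⟩
    obtain ⟨r, hr⟩ := exists_shear_mulVec_baerMap hσ hfix c w
    refine ⟨(f + r, w), Submodule.mem_top, ?_⟩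
    rwa [← hr, hasCoords_mul_mulVec_iff (isUnit_det_shear c (σ c))]

lemma IsLinfFrame.apply_two_ne_zero (hN : IsLinfFrame N) (hT : HasCoords N T ![1, 0, 0])
    (hP : P ∈ linf K) (hPT : P ≠ T) (hv : HasCoords N P v) : v 2 ≠ 0 := by
  intro hv2
  have hv1 : v 1 = 0 := (hN.mem_linf_iff hv).1 hP
  have hvT : v = v 0 • ![1, 0, 0] := by
    ext i
    fin_cases i <;> simp [hv1, hv2]
  have hv0 : v 0 ≠ 0 := by
    intro hv0
    exact hv.ne_zero hN.isUnit_det (by rw [hvT, hv0, zero_smul])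
  rw [hvT, hasCoords_smul_iff hv0] at hv
  exact hPT (hv.eq hN.isUnit_det hT)

lemma exists_isLinfFrame_hasCoords (hFK : Module.finrank F K = 2)
    (hσ : Function.Involutive σ) (hfix : ∀ x, σ x = x → x ∈ Set.range (algebraMap F K))
    {τ : K} (hτ : σ τ ≠ τ) {B : Set (PP K 3)} (hB : IsBaerSubplane F B) (hT : B ∩ linf K = {T})
    (hP : P ∈ linf K) (hPT : P ≠ T) :
    ∃ N, IsLinfFrame N ∧ B = baerPoints N σ ⊤ ∧ HasCoords N P ![0, 0, 1] := by
  obtain ⟨N, hN, rfl⟩ := exists_isLinfFrame hFK hτ hB hT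
  obtain ⟨hTB, hTlinf⟩ := hT.ge (rfl : T = T)
  have hTN := hN.hasCoords_of_mem_baerPoints hTB hTlinf
  obtain ⟨v, hv⟩ : ∃ v, HasCoords N P v := ⟨_, hasCoords_mulVec_rep N P⟩
  have hv1 : v 1 = 0 := (hN.mem_linf_iff hv).1 hP
  have hv2 : v 2 ≠ 0 := hN.apply_two_ne_zero hTN hP hPT hv
  obtain ⟨c, hc⟩ : ∃ c, σ c = -v 0 / v 2 := σ.surjective _
  refine ⟨shear c (σ c) * N, hN.shear_mul _ _, (baerPoints_shear_mul hσ hfix c).symm, ?_⟩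
  have hSv : shear c (σ c) *ᵥ v = v 2 • ![0, 0, 1] := by
    simp [shear_mulVec, hv1, hc, div_mul_cancel₀ _ hv2]
  rwa [← hasCoords_smul_iff hv2, ← hSv, hasCoords_mul_mulVec_iff (isUnit_det_shear _ _)]

end Frame

section BaerLines

lemma IsLineOfExt.nontrivial {q : ℕ} (hq : q ≠ 0) {B m l : Set (PP K 3)}
    (hm : IsLineOfExt q B m l) : m.Nontrivial := by
  obtain ⟨-, -, hcard⟩ := hm
  exact (Set.one_lt_ncard_iff_nontrivial_and_finite.1 (by omega)).1

variable {F : Type} [Field F] [Algebra F K] {σ : K ≃ₐ[F] K} {N : Matrix (Fin 3) (Fin 3) K}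
  {P T : PP K 3} {l m : Set (PP K 3)}

lemma finrank_submodule_prod {k V W : Type*} [Field k] [AddCommGroup V] [Module k V]
    [AddCommGroup W] [Module k W] [FiniteDimensional k V] [FiniteDimensional k W]
    (S : Submodule k V) (S' : Submodule k W) :
    Module.finrank k (S.prod S') = Module.finrank k S + Module.finrank k S' := by
  have hrange : S.prod S' = (S.subtype.prodMap S'.subtype).range := by
    rw [LinearMap.range_prodMap, S.range_subtype, S'.range_subtype]
  have hinj : Function.Injective (S.subtype.prodMap S'.subtype) :=
    S.injective_subtype.prodMap S'.injective_subtype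
  rw [hrange, LinearMap.finrank_range_of_inj hinj, Module.finrank_prod]

lemma isLineOfExt_baerPoints [Finite F] (hfix : ∀ x, σ x = x → x ∈ Set.range (algebraMap F K))
    (hN : IsUnit N.det) {U : Submodule F (F × K)} (hU : Module.finrank F U = 2) {a : Fin 3 → K}
    (ha : a ≠ 0) (haU : ∀ u, a ⬝ᵥ baerMap σ u = 0 ↔ u ∈ U) :
    IsLineOfExt (Nat.card F) (baerPoints N σ ⊤) (baerPoints N σ U)
      {p | a ⬝ᵥ N *ᵥ p.rep = 0} := by
  refine ⟨(isFlat_iff_exists_dotProduct hN rfl).2 ⟨a, ha, rfl⟩, ?_,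
    ncard_baerPoints_of_finrank_eq_two hfix hN hU⟩
  ext p
  constructor
  · rintro ⟨u, hu, hp⟩
    exact ⟨⟨u, Submodule.mem_top, hp⟩, (hp.dotProduct_eq_zero_iff a).2 ((haU u).2 hu)⟩
  · rintro ⟨⟨u, -, hp⟩, hpa⟩
    exact ⟨u, (haU u).1 ((hp.dotProduct_eq_zero_iff a).1 hpa), hp⟩

lemma dotProduct_baerMap (a : Fin 3 → K) (u : F × K) :
    a ⬝ᵥ baerMap σ u = a 0 * algebraMap F K u.1 + a 1 * u.2 + a 2 * σ u.2 := by
  rw [baerMap_apply, dotProduct, Fin.sum_univ_three]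
  rfl

lemma exists_isLineOfExt_vertex_mem [Finite F] (hFK : Module.finrank F K = 2)
    (hfix : ∀ x, σ x = x → x ∈ Set.range (algebraMap F K)) (hN : IsUnit N.det)
    (hP : HasCoords N P ![0, 0, 1]) :
    ∃ l, IsLineOfExt (Nat.card F) (baerPoints N σ ⊤) (baerPoints N σ (LinearMap.fst F F K).ker) l ∧
      P ∈ l := by
  refine ⟨_, isLineOfExt_baerPoints hfix hN (a := ![1, 0, 0]) ?_ (by simp) ?_, ?_⟩
  · rw [LinearMap.ker_fst, LinearMap.finrank_range_of_inj LinearMap.inr_injective, hFK]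
  · simp [baerMap_apply]
  · exact (hP.dotProduct_eq_zero_iff _).2 (by simp)

lemma conj_mul_eq_iff_mem_span_singleton (hfix : ∀ x, σ x = x → x ∈ Set.range (algebraMap F K))
    {a w : K} (ha : a ≠ 0) : σ a * w - a * σ w = 0 ↔ w ∈ F ∙ a := by
  rw [sub_eq_zero, Submodule.mem_span_singleton]
  constructor
  · intro h
    have hw : σ (w / a) = w / a := by
      rw [map_div₀, div_eq_div_iff ((map_ne_zero σ).2 ha) ha, mul_comm, ← h, mul_comm]
    obtain ⟨r, hr⟩ := hfix _ hw
    exact ⟨r, by rw [Algebra.smul_def, hr, div_mul_cancel₀ _ ha]⟩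
  · rintro ⟨r, rfl⟩
    rw [map_smul, Algebra.smul_def, Algebra.smul_def]
    ring

lemma isLineOf_baerPoints_prod_span_singleton [Finite F] (hFK : Module.finrank F K = 2)
    (hfix : ∀ x, σ x = x → x ∈ Set.range (algebraMap F K)) (hN : IsUnit N.det) {a : K}
    (ha : a ≠ 0) :
    IsLineOf (Nat.card F) (baerPoints N σ ⊤) (baerPoints N σ (Submodule.prod ⊤ (F ∙ a))) := by
  have : FiniteDimensional F K := Module.finite_of_finrank_eq_succ hFK
  refine ⟨_, isLineOfExt_baerPoints hfix hN (a := ![0, σ a, -a]) ?_ (by simp [ha]) fun u ↦ ?_⟩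
  · rw [finrank_submodule_prod, finrank_top, Module.finrank_self, finrank_span_singleton ha]
  · simp [baerMap_apply, ← conj_mul_eq_iff_mem_span_singleton hfix ha, ← sub_eq_add_neg]

lemma IsLineOfExt.eq_baerPoints_of_vertex_mem [Finite F] (hN : IsUnit N.det)
    (hP : HasCoords N P ![0, 0, 1]) (hm : IsLineOfExt (Nat.card F) (baerPoints N σ ⊤) m l)
    (hPl : P ∈ l) : m = baerPoints N σ (LinearMap.fst F F K).ker := by
  have hnontriv := hm.nontrivial Nat.card_pos.ne'
  obtain ⟨hl, hml, -⟩ := hm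
  obtain ⟨a, ha, rfl⟩ := (isFlat_iff_exists_dotProduct hN rfl).1 hl
  have ha2 : a 2 = 0 := by
    simpa [dotProduct, Fin.sum_univ_three] using (hP.dotProduct_eq_zero_iff a).1 hPl
  have hmem {p : PP K 3} {u : F × K} (hp : HasCoords N p (baerMap σ u)) :
      a ⬝ᵥ N *ᵥ p.rep = 0 ↔ a 0 * algebraMap F K u.1 + a 1 * u.2 = 0 := by
    rw [hp.dotProduct_eq_zero_iff, dotProduct_baerMap, ha2, zero_mul, add_zero]
  have ha1 : a 1 = 0 := by
    by_contra ha1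
    have hsub : m ⊆ baerPoints N σ (F ∙ (1, -(a 0 / a 1))) := by
      rw [hml]
      rintro p ⟨⟨u, -, hp⟩, hpa⟩
      have hu := (hmem hp).1 hpa
      refine ⟨u, Submodule.mem_span_singleton.2 ⟨u.1, Prod.ext (mul_one _) ?_⟩, hp⟩
      rw [Prod.smul_snd, Algebra.smul_def]
      field_simp
      linear_combination -hu
    exact hnontriv.not_subsingleton ((subsingleton_baerPoints_span_singleton hN _).anti hsub)
  have ha0 : a 0 ≠ 0 := by
    intro ha0
    refine ha (funext fun i ↦ ?_)
    fin_cases i <;> assumption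
  rw [hml]
  ext p
  constructor
  · rintro ⟨⟨u, -, hp⟩, hpa⟩
    exact ⟨u, by simpa [ha0, ha1] using (hmem hp).1 hpa, hp⟩
  · rintro ⟨u, hu, hp⟩
    exact ⟨⟨u, Submodule.mem_top, hp⟩, (hmem hp).2 (by simpa [ha0, ha1] using hu)⟩

lemma IsLineOf.exists_eq_baerPoints_of_mem_linf [Finite F] (hFK : Module.finrank F K = 2)
    (hfix : ∀ x, σ x = x → x ∈ Set.range (algebraMap F K)) (hN : IsUnit N.det)
    (hT : HasCoords N T ![1, 0, 0]) (hm : IsLineOf (Nat.card F) (baerPoints N σ ⊤) m)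
    (hTm : T ∈ m) : ∃ a : K, a ≠ 0 ∧ m = baerPoints N σ (Submodule.prod ⊤ (F ∙ a)) := by
  have : FiniteDimensional F K := Module.finite_of_finrank_eq_succ hFK
  obtain ⟨l, hm⟩ := hm
  have hnontriv := hm.nontrivial Nat.card_pos.ne'
  obtain ⟨hl, hml, hcard⟩ := hm
  obtain ⟨b, -, rfl⟩ := (isFlat_iff_exists_dotProduct hN rfl).1 hl
  have hb0 : b 0 = 0 := by
    simpa [dotProduct, Fin.sum_univ_three] using (hT.dotProduct_eq_zero_iff b).1 (hml.le hTm).2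
  have hmem {p : PP K 3} {u : F × K} (hp : HasCoords N p (baerMap σ u)) :
      b ⬝ᵥ N *ᵥ p.rep = 0 ↔ b 1 * u.2 + b 2 * σ u.2 = 0 := by
    rw [hp.dotProduct_eq_zero_iff, dotProduct_baerMap, hb0, zero_mul, zero_add]
  obtain ⟨p, hp, hpT⟩ := hnontriv.exists_ne T
  obtain ⟨⟨⟨f, w⟩, -, hpu⟩, hpb⟩ := hml.le hp
  have hw : w ≠ 0 := by
    rintro rfl
    exact hpT ((hpu.of_baerMap_fst hN).eq hN hT)
  refine ⟨w, hw, (Set.eq_of_subset_of_ncard_le ?_ ?_ ?_).symm⟩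
  · rintro x ⟨⟨g, _⟩, ⟨-, hx⟩, hxu⟩
    obtain ⟨r, rfl⟩ := Submodule.mem_span_singleton.1 hx
    rw [hml]
    refine ⟨⟨_, Submodule.mem_top, hxu⟩, (hmem hxu).2 ?_⟩
    have hbw : b 1 * w + b 2 * σ w = 0 := (hmem hpu).1 hpb
    rw [map_smul, Algebra.smul_def, Algebra.smul_def]
    linear_combination algebraMap F K r * hbw
  · obtain ⟨_, -, -, hcard'⟩ := isLineOf_baerPoints_prod_span_singleton hFK hfix hN hw
    rw [hcard, hcard']
  · exact Set.finite_of_ncard_ne_zero (by omega)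

end BaerLines

section Pencils

variable {F : Type} [Field F] [Algebra F K] {N : Matrix (Fin 3) (Fin 3) K} {p P : PP K 3}
  {v : Fin 3 → K} {A A' : Set K}

/-- The union of the line at infinity and the lines joining `(0, 0, 1)` to `(t, 1, 0)` for `t` in
`A`, in coordinates given by a frame `N` with `IsLinfFrame N`. -/
def linePencil (N : Matrix (Fin 3) (Fin 3) K) (A : Set K) : Set (PP K 3) :=
  {p | (N *ᵥ p.rep) 1 = 0 ∨ (N *ᵥ p.rep) 0 / (N *ᵥ p.rep) 1 ∈ A}

lemma mem_linePencil_iff (hp : HasCoords N p v) :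
    p ∈ linePencil N A ↔ v 1 = 0 ∨ v 0 / v 1 ∈ A := by
  obtain ⟨c, hc, h⟩ := hp
  simp [linePencil, h, hc, mul_div_mul_left]

lemma linePencil_injective (hN : IsUnit N.det) : Function.Injective (linePencil N) := by
  intro A A' h
  ext t
  obtain ⟨p, hp⟩ := exists_hasCoords hN (v := ![t, 1, 0]) (by simp)
  simpa [mem_linePencil_iff hp] using Set.ext_iff.1 h p

lemma mimg_mul_eq_of_mul_self_eq_one {E : Matrix (Fin n) (Fin n) K} (hE : E * E = 1)
    {S : Set (Fin n → K)} (hS : ∀ s ∈ S, ∃ c : K, c ≠ 0 ∧ ∃ s' ∈ S, E *ᵥ s = c • s')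
    (M : Matrix (Fin m) (Fin n) K) : mimg (M * E) S = mimg M S := by
  have hsub (M : Matrix (Fin m) (Fin n) K) : mimg (M * E) S ⊆ mimg M S := by
    rintro p ⟨s, hs, hp⟩
    obtain ⟨d, hd, hp⟩ := mem_projPt_iff.1 hp
    obtain ⟨c, hc, s', hs', h⟩ := hS s hs
    refine ⟨s', hs', mem_projPt_iff.2 ⟨d * c, mul_ne_zero hd hc, ?_⟩⟩
    rw [hp, ← mulVec_mulVec, h, mulVec_smul, smul_smul]
  refine (hsub M).antisymm ?_
  simpa only [Matrix.mul_assoc, hE, Matrix.mul_one] using hsub (M * E)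

/-- An involution of the standard Baer subline exchanging `(1, 0, 0)` and `(θ, 1, 0)`. -/
def sublineInvolution (θ : K) : Matrix (Fin 3) (Fin 3) K := !![θ, 1 - θ ^ 2, 0; 1, -θ, 0; 0, 0, 1]

lemma sublineInvolution_mul_self (θ : K) : sublineInvolution θ * sublineInvolution θ = 1 := by
  ext i j
  fin_cases i <;> fin_cases j <;> simp [sublineInvolution, mul_apply, Fin.sum_univ_three] <;> ring

lemma sublineInvolution_mulVec (θ x y z : K) :
    sublineInvolution θ *ᵥ ![x, y, z] = ![θ * x + (1 - θ ^ 2) * y, x - θ * y, z] := by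
  ext i
  fin_cases i <;> simp [sublineInvolution, mulVec, dotProduct, Fin.sum_univ_three, sub_eq_add_neg]

lemma mimg_mul_sublineInvolution_linfVecs (M : Matrix (Fin 3) (Fin 3) K) (θ : K) :
    mimg (M * sublineInvolution θ) (linfVecs K) = mimg M (linfVecs K) := by
  refine mimg_mul_eq_of_mul_self_eq_one (sublineInvolution_mul_self θ) ?_ M
  rintro s ⟨hs, hs2⟩
  refine ⟨1, one_ne_zero, _, ⟨?_, ?_⟩, (one_smul K _).symm⟩
  · intro h
    have := congrArg (sublineInvolution θ *ᵥ ·) h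
    simp only [mulVec_mulVec, sublineInvolution_mul_self, one_mulVec, mulVec_zero] at this
    exact hs this
  · simp [sublineInvolution, mulVec, dotProduct, Fin.sum_univ_three, hs2]

lemma mimg_mul_sublineInvolution_sublineVecs (M : Matrix (Fin 3) (Fin 3) K) (θ : F) :
    mimg (M * sublineInvolution (algebraMap F K θ)) (sublineVecs F K) =
      mimg M (sublineVecs F K) := by
  refine mimg_mul_eq_of_mul_self_eq_one (sublineInvolution_mul_self _) ?_ M
  rintro _ (⟨η, rfl⟩ | rfl)
  · rw [sublineInvolution_mulVec]
    obtain rfl | hη := eq_or_ne η θ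
    · exact ⟨1, one_ne_zero, _, .inr rfl, by ext i; fin_cases i <;> simp; ring⟩
    · have hη' : algebraMap F K η - algebraMap F K θ ≠ 0 :=
        sub_ne_zero.2 ((algebraMap F K).injective.ne hη)
      refine ⟨_, hη', _, .inl ⟨(θ * η + (1 - θ ^ 2)) / (η - θ), rfl⟩, ?_⟩
      ext i
      fin_cases i <;> simp [mul_div_cancel₀ _ hη']
  · rw [sublineInvolution_mulVec]
    exact ⟨1, one_ne_zero, _, .inl ⟨θ, rfl⟩, by simp⟩

lemma IsBaerSublineOf.exists_matrix_of_mem {b ℓ : Set (PP K 3)} (hb : IsBaerSublineOf F b ℓ)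
    {X : PP K 3} (hX : X ∈ b) :
    ∃ M : Matrix (Fin 3) (Fin 3) K, IsUnit M.det ∧ ℓ = mimg M (linfVecs K) ∧
      b = mimg M (sublineVecs F K) ∧ X ∈ projPt (M *ᵥ ![1, 0, 0]) := by
  obtain ⟨M, hM, rfl, rfl⟩ := hb
  obtain ⟨_, ⟨θ, rfl⟩ | rfl, hX⟩ := hX
  · refine ⟨M * sublineInvolution (algebraMap F K θ), ?_,
      (mimg_mul_sublineInvolution_linfVecs M _).symm,
      (mimg_mul_sublineInvolution_sublineVecs M θ).symm, ?_⟩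
    · rw [det_mul]
      exact hM.mul (.of_mul_eq_one _ (by rw [← det_mul, sublineInvolution_mul_self, det_one]))
    · rw [← mulVec_mulVec, sublineInvolution_mulVec]
      simpa using hX
  · exact ⟨M, hM, rfl, rfl, hX⟩

lemma mem_lineTh_iff_mul_eq_mul (hN : IsUnit N.det) (hP : HasCoords N P ![0, 0, 1])
    (hp : HasCoords N p v) {X : PP K 3} {y : Fin 3 → K} (hX : HasCoords N X y)
    (hy : y 0 ≠ 0 ∨ y 1 ≠ 0) : p ∈ lineTh P X ↔ v 0 * y 1 = v 1 * y 0 := by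
  rw [mem_lineTh_iff hN hp hP hX]
  constructor
  · rintro ⟨a, b, rfl⟩
    simp
    ring
  · intro h
    obtain ⟨b, hb0, hb1⟩ : ∃ b, v 0 = b * y 0 ∧ v 1 = b * y 1 := by
      obtain hy | hy := hy
      · exact ⟨v 0 / y 0, by field_simp, by field_simp; rw [h]⟩
      · exact ⟨v 1 / y 1, by field_simp; rw [h], by field_simp⟩
    refine ⟨v 2 - b * y 2, b, ?_⟩
    ext i
    fin_cases i <;> simp [hb0, hb1]

lemma exists_mem_lineTh_iff (hN : IsUnit N.det) (hP : HasCoords N P ![0, 0, 1])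
    (hp : HasCoords N p v) {y : Fin 3 → K} (hy : y 0 ≠ 0 ∨ y 1 ≠ 0) :
    (∃ X, HasCoords N X y ∧ p ∈ lineTh P X) ↔ v 0 * y 1 = v 1 * y 0 := by
  have hy0 : y ≠ 0 := by
    rintro rfl
    simp at hy
  obtain ⟨X, hX⟩ := exists_hasCoords hN hy0
  rw [← mem_lineTh_iff_mul_eq_mul hN hP hp hX hy]
  exact ⟨fun ⟨X', hX', h⟩ ↦ hX'.eq hN hX ▸ h, fun h ↦ ⟨X, hX, h⟩⟩

lemma mem_iUnion_lineTh_iff (hN : IsUnit N.det) (hP : HasCoords N P ![0, 0, 1])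
    (hp : HasCoords N p v) {M C : Matrix (Fin 3) (Fin 3) K} (hC : N * M = C) (h00 : C 0 0 ≠ 0)
    (h10 : C 1 0 = 0) (h11 : C 1 1 ≠ 0) :
    p ∈ ⋃ X ∈ mimg M (sublineVecs F K), lineTh P X ↔
      v 1 = 0 ∨ ∃ θ : F, v 0 * C 1 1 = v 1 * (C 0 0 * algebraMap F K θ + C 0 1) := by
  have hvec (x y : K) : C *ᵥ ![x, y, 0] =
      ![C 0 0 * x + C 0 1 * y, C 1 1 * y, C 2 0 * x + C 2 1 * y] := by
    ext i
    fin_cases i <;> simp [mulVec, dotProduct, Fin.sum_univ_three, h10]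
  have hfinite (θ : F) : (∃ X, HasCoords N X (C *ᵥ ![algebraMap F K θ, 1, 0]) ∧ p ∈ lineTh P X) ↔
      v 0 * C 1 1 = v 1 * (C 0 0 * algebraMap F K θ + C 0 1) := by
    rw [exists_mem_lineTh_iff hN hP hp] <;> simp [hvec, h11]
  have hinfinite : (∃ X, HasCoords N X (C *ᵥ ![1, 0, 0]) ∧ p ∈ lineTh P X) ↔ v 1 = 0 := by
    rw [exists_mem_lineTh_iff hN hP hp] <;> simp [hvec, h00]
  simp only [← hfinite, ← hinfinite, Set.mem_iUnion, mem_mimg_iff hN, hC, sublineVecs]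
  constructor
  · rintro ⟨X, ⟨_, ⟨θ, rfl⟩ | rfl, hX⟩, hXp⟩
    · exact .inr ⟨θ, X, hX, hXp⟩
    · exact .inl ⟨X, hX, hXp⟩
  · rintro (⟨X, hX, hXp⟩ | ⟨θ, X, hX, hXp⟩)
    · exact ⟨X, ⟨_, .inr rfl, hX⟩, hXp⟩
    · exact ⟨X, ⟨_, .inl ⟨θ, rfl⟩, hX⟩, hXp⟩

lemma iUnion_lineTh_eq_linePencil (hN : IsUnit N.det) (hP : HasCoords N P ![0, 0, 1])
    {M C : Matrix (Fin 3) (Fin 3) K} (hC : N * M = C) (h00 : C 0 0 ≠ 0) (h10 : C 1 0 = 0)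
    (h11 : C 1 1 ≠ 0) :
    ⋃ X ∈ mimg M (sublineVecs F K), lineTh P X =
      linePencil N (Set.range fun θ : F ↦ C 0 1 / C 1 1 + θ • (C 0 0 / C 1 1)) := by
  ext p
  have hp := hasCoords_mulVec_rep N p
  rw [mem_iUnion_lineTh_iff hN hP hp hC h00 h10 h11, mem_linePencil_iff hp]
  refine or_congr_right' fun h1 ↦ exists_congr fun θ ↦ ?_
  simp only [eq_div_iff h1, Algebra.smul_def]
  field_simp
  rw [eq_comm, add_comm]

lemma HasCoords.mem_mimg_linfVecs (hN : IsUnit N.det) (hP : HasCoords N P ![0, 0, 1])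
    {M : Matrix (Fin 3) (Fin 3) K} (hM : IsUnit M.det) {s : Fin 3 → K} (hs : s ∈ linfVecs K)
    (h0 : ((N * M) *ᵥ s) 0 = 0) (h1 : ((N * M) *ᵥ s) 1 = 0) : P ∈ mimg M (linfVecs K) := by
  have hNM : IsUnit (N * M).det := by
    rw [det_mul]
    exact hN.mul hM
  have hvec : (N * M) *ᵥ s = ((N * M) *ᵥ s) 2 • ![0, 0, 1] := by
    ext i
    fin_cases i <;> simp [h0, h1]
  refine (mem_mimg_iff hN M _).2 ⟨s, hs, ?_⟩
  rw [hvec, hasCoords_smul_iff]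
  · exact hP
  · intro h2
    rw [h2, zero_smul] at hvec
    exact hs.1 (mulVec_inj _ hNM (by rw [hvec, mulVec_zero]))

lemma IsLinfBaerPencil.exists_eq_linePencil (hN : IsLinfFrame N) (hP : HasCoords N P ![0, 0, 1])
    {𝒦 : Set (PP K 3)} (h𝒦 : IsLinfBaerPencil F 𝒦 P) :
    ∃ A, IsAffineLine F A ∧ 𝒦 = linePencil N A := by
  obtain ⟨-, ℓ, b, hb, hPℓ, ⟨X, ⟨hXb, hX⟩, -⟩, rfl⟩ := h𝒦
  obtain ⟨M, hM, rfl, rfl, hXM⟩ := hb.exists_matrix_of_mem hXb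
  set C := N * M with hC
  rw [mem_projPt_iff_hasCoords hN.isUnit_det, mulVec_mulVec] at hXM
  have h10 : C 1 0 = 0 := by
    simpa [mulVec, dotProduct, Fin.sum_univ_three] using (hN.mem_linf_iff hXM).1 hX
  have hne (s : Fin 3 → K) (hs : s ∈ linfVecs K) (h1 : (C *ᵥ s) 1 = 0) : (C *ᵥ s) 0 ≠ 0 :=
    fun h0 ↦ hPℓ (hP.mem_mimg_linfVecs hN.isUnit_det hM hs h0 h1)
  have h00 : C 0 0 ≠ 0 := by
    simpa [mulVec, dotProduct, Fin.sum_univ_three, h10, linfVecs] using hne ![1, 0, 0]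
  have h11 : C 1 1 ≠ 0 := by
    intro h11
    refine hne ![-C 0 1, C 0 0, 0] ⟨by simp [h00], rfl⟩ ?_ ?_ <;>
      simp [mulVec, dotProduct, Fin.sum_univ_three, h10, h11, mul_comm]
  exact ⟨_, ⟨_, _, div_ne_zero h00 h11, rfl⟩,
    iUnion_lineTh_eq_linePencil hN.isUnit_det hP rfl h00 h10 h11⟩

lemma isLinfBaerPencil_linePencil (hN : IsLinfFrame N) (hP : HasCoords N P ![0, 0, 1])
    (hA : IsAffineLine F A) : IsLinfBaerPencil F (linePencil N A) P := by
  obtain ⟨a, b, ha, rfl⟩ := hA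
  have hNu := hN.isUnit_det
  set D : Matrix (Fin 3) (Fin 3) K := !![a, b, 0; 0, 1, 0; 0, 0, 1] with hD
  have hvec (s : Fin 3 → K) : D *ᵥ s = ![a * s 0 + b * s 1, s 1, s 2] := by
    ext i
    fin_cases i <;> simp [hD, mulVec, dotProduct, Fin.sum_univ_three]
  have hdet : IsUnit (N⁻¹ * D).det := by
    rw [det_mul]
    refine (isUnit_nonsing_inv_det_iff.2 hNu).mul ?_
    simp [hD, det_fin_three, ha]
  refine ⟨(hN.mem_linf_iff hP).2 rfl, _, _, ⟨_, hdet, rfl, rfl⟩, ?_, ?_, ?_⟩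
  · rw [mem_mimg_inv_mul_iff hNu]
    rintro ⟨s, ⟨hs, hs2⟩, hPs⟩
    obtain ⟨c, -, hc⟩ := hPs.exists_eq_smul hP
    rw [hvec] at hc
    have hs1 : s 1 = 0 := by simpa using congrFun hc 1
    have hs0 : s 0 = 0 := by simpa [hs1, ha] using congrFun hc 0
    exact hs (by ext i; fin_cases i <;> assumption)
  · have hiff (X : PP K 3) : X ∈ mimg (N⁻¹ * D) (sublineVecs F K) ∩ linf K ↔
        HasCoords N X (D *ᵥ ![1, 0, 0]) := by
      rw [Set.mem_inter_iff, mem_mimg_inv_mul_iff hNu]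
      constructor
      · rintro ⟨⟨_, ⟨θ, rfl⟩ | rfl, hX⟩, hXinf⟩
        · simpa [hvec] using (hN.mem_linf_iff hX).1 hXinf
        · exact hX
      · intro hX
        exact ⟨⟨_, .inr rfl, hX⟩, (hN.mem_linf_iff hX).2 (by simp [hvec])⟩
    simp only [hiff]
    obtain ⟨X, hX⟩ := exists_hasCoords hNu (v := D *ᵥ ![1, 0, 0]) (by simp [hvec, ha])
    exact ⟨X, hX, fun Y hY ↦ hY.eq hNu hX⟩
  · rw [iUnion_lineTh_eq_linePencil hNu hP (mul_nonsing_inv_cancel_left N D hNu)] <;>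
      simp [hD, ha]

end Pencils

section Intersections

variable {F : Type} [Field F] [Algebra F K] {σ : K ≃ₐ[F] K} {N : Matrix (Fin 3) (Fin 3) K}
  {P T : PP K 3} {A : Set K}

lemma linePencil_inter_baerPoints_eq_union (a : K) :
    linePencil N (F ∙ a : Set K) ∩ baerPoints N σ ⊤ =
      baerPoints N σ (LinearMap.fst F F K).ker ∪
        baerPoints N σ (Submodule.prod ⊤ (F ∙ a⁻¹)) := by
  have hslope (u : F × K) : (u.2 = 0 ∨ algebraMap F K u.1 / u.2 ∈ F ∙ a) ↔
      u.1 = 0 ∨ u.2 ∈ F ∙ a⁻¹ := by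
    obtain ⟨f, w⟩ := u
    simp only [Submodule.mem_span_singleton, Algebra.smul_def]
    constructor
    · intro h
      by_cases hw : w = 0
      · exact .inr ⟨0, by simp [hw]⟩
      · obtain ⟨r, hr⟩ := h.resolve_left hw
        refine or_iff_not_imp_left.2 fun hf ↦ ⟨f / r, ?_⟩
        rw [map_div₀, ← div_eq_mul_inv, div_div, hr, div_div_cancel₀ ((map_ne_zero _).2 hf)]
    · rintro (rfl | ⟨r, rfl⟩)
      · exact .inr ⟨0, by simp⟩
      · exact .inr ⟨f / r, by rw [map_div₀, div_mul_eq_div_div, div_inv_eq_mul]⟩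
  ext p
  constructor
  · rintro ⟨hpA, u, -, hp⟩
    obtain hu | hu := (hslope u).1 ((mem_linePencil_iff hp).1 hpA)
    · exact .inl ⟨u, hu, hp⟩
    · exact .inr ⟨u, ⟨Submodule.mem_top, hu⟩, hp⟩
  · rintro (⟨u, hu, hp⟩ | ⟨u, ⟨-, hu⟩, hp⟩)
    · exact ⟨(mem_linePencil_iff hp).2 ((hslope u).2 (.inl hu)), u, Submodule.mem_top, hp⟩
    · exact ⟨(mem_linePencil_iff hp).2 ((hslope u).2 (.inr hu)), u, Submodule.mem_top, hp⟩

/-- The matrix carrying `(1, θ, θ ^ 2)` to `(x * σ x, σ x, x)` with `x = b + θ * a`. -/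
def conicMatrix (σ : K ≃ₐ[F] K) (a b : K) : Matrix (Fin 3) (Fin 3) K :=
  !![b * σ b, a * σ b + b * σ a, a * σ a; σ b, σ a, 0; b, a, 0]

lemma isUnit_det_conicMatrix (hfix : ∀ x, σ x = x → x ∈ Set.range (algebraMap F K)) {a b : K}
    (ha : a ≠ 0) (hb : b ∉ F ∙ a) : IsUnit (conicMatrix σ a b).det := by
  have hdet : (conicMatrix σ a b).det = -(a * σ a) * (σ a * b - a * σ b) := by
    simp [conicMatrix, det_fin_three]
    ring
  rw [hdet, isUnit_iff_ne_zero]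
  exact mul_ne_zero (neg_ne_zero.2 (mul_ne_zero ha ((map_ne_zero σ).2 ha)))
    (mt (conj_mul_eq_iff_mem_span_singleton hfix ha).1 hb)

lemma conicMatrix_mulVec (a b : K) (θ : F) :
    conicMatrix σ a b *ᵥ ![1, algebraMap F K θ, algebraMap F K θ ^ 2] =
      ![(b + θ • a) * σ (b + θ • a), σ (b + θ • a), b + θ • a] := by
  ext i
  fin_cases i <;>
    simp [conicMatrix, mulVec, dotProduct, Fin.sum_univ_three, Algebra.smul_def] <;> ring

lemma conicMatrix_mulVec_infty (a b : K) :
    conicMatrix σ a b *ᵥ ![0, 0, 1] = (a * σ a) • ![1, 0, 0] := by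
  ext i
  fin_cases i <;> simp [conicMatrix, mulVec, dotProduct, Fin.sum_univ_three]

lemma linePencil_inter_baerPoints_eq_mimg (hσ : Function.Involutive σ)
    (hfix : ∀ x, σ x = x → x ∈ Set.range (algebraMap F K)) (hN : IsUnit N.det) {a b : K}
    (ha : a ≠ 0) (hb : b ∉ F ∙ a) :
    linePencil N (Set.range fun θ : F ↦ b + θ • a) ∩ baerPoints N σ ⊤ =
      mimg (N⁻¹ * conicMatrix σ a b) (conicVecs (Set.range (algebraMap F K))) := by
  have hnorm : a * σ a ≠ 0 := mul_ne_zero ha ((map_ne_zero σ).2 ha)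
  ext p
  rw [mem_mimg_inv_mul_iff hN]
  constructor
  · rintro ⟨hpA, ⟨f, w⟩, -, hp⟩
    by_cases hw : w = 0
    · subst hw
      refine ⟨_, .inr rfl, ?_⟩
      rw [conicMatrix_mulVec_infty, hasCoords_smul_iff hnorm]
      exact hp.of_baerMap_fst hN
    · obtain ⟨θ, hθ : b + θ • a = algebraMap F K f / w⟩ :=
        ((mem_linePencil_iff hp).1 hpA).resolve_left hw
      refine ⟨_, .inl ⟨_, ⟨θ, rfl⟩, rfl⟩, ?_⟩
      rw [conicMatrix_mulVec]
      set x := b + θ • a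
      have hx0 : x ≠ 0 := by
        intro h
        rw [eq_neg_of_add_eq_zero_left h, neg_mem_iff] at hb
        exact hb (Submodule.smul_mem _ θ (Submodule.mem_span_singleton_self a))
      have hσx : σ x ≠ 0 := (map_ne_zero σ).2 hx0
      have hf : algebraMap F K f = x * w := by rw [hθ, div_mul_cancel₀ _ hw]
      have hf' : algebraMap F K f = σ x * σ w := by rw [← map_mul, ← hf, σ.commutes]
      rw [← hasCoords_smul_iff (div_ne_zero hw hσx)]
      have hσw : w / σ x * x = σ w := by
        rw [div_mul_eq_mul_div, div_eq_iff hσx, mul_comm w, ← hf, hf', mul_comm]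
      have hvec : (w / σ x) • ![x * σ x, σ x, x] = baerMap σ (f, w) := by
        simp [baerMap_apply, hf, hσw, div_mul_cancel₀ _ hσx, mul_comm x, ← mul_assoc]
      rwa [hvec]
  · rintro ⟨_, ⟨_, ⟨θ, rfl⟩, rfl⟩ | rfl, hp⟩
    · rw [conicMatrix_mulVec] at hp
      set x := b + θ • a
      obtain ⟨f, hf⟩ := hfix (x * σ x) (by rw [map_mul, hσ, mul_comm])
      have hu : baerMap σ (f, σ x) = ![x * σ x, σ x, x] := by rw [baerMap_apply, hf, hσ x]
      refine ⟨(mem_linePencil_iff hp).2 ?_, (f, σ x), Submodule.mem_top, hu ▸ hp⟩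
      exact or_iff_not_imp_left.2 fun h ↦ ⟨θ, (mul_div_cancel_right₀ x h).symm⟩
    · rw [conicMatrix_mulVec_infty, hasCoords_smul_iff hnorm] at hp
      exact ⟨(mem_linePencil_iff hp).2 (.inl rfl), (1, 0), Submodule.mem_top, by
        simpa [baerMap_apply] using hp⟩

lemma encard_mimg_le (M : Matrix (Fin m) (Fin n) K) (S : Set (Fin n → K)) :
    (mimg M S).encard ≤ S.encard := by
  choose! s hsS hs using fun p (hp : p ∈ mimg M S) ↦ hp
  refine Set.encard_le_encard_of_injOn hsS fun p hp p' hp' h ↦ ?_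
  obtain ⟨_, hpv⟩ := hs p hp
  obtain ⟨_, hpv'⟩ := hs p' hp'
  rw [hpv, hpv']
  simp only [h]

lemma IsFqConic.encard_le {C : Set (PP K 3)} (hC : IsFqConic F C) :
    C.encard ≤ ENat.card F + 1 := by
  obtain ⟨M, -, rfl⟩ := hC
  have hvecs : conicVecs (Set.range (algebraMap F K)) =
      insert ![0, 0, 1] ((fun θ : F ↦ ![1, algebraMap F K θ, algebraMap F K θ ^ 2]) '' .univ) := by
    ext v
    simp [conicVecs, eq_comm]
  calc (mimg M (conicVecs (Set.range (algebraMap F K)))).encard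
    _ ≤ (conicVecs (Set.range (algebraMap F K))).encard := encard_mimg_le M _
    _ ≤ (Set.univ : Set F).encard + 1 := by
      rw [hvecs]
      exact (Set.encard_insert_le _ _).trans (by gcongr; exact Set.encard_image_le _ _)
    _ = ENat.card F + 1 := by rw [Set.encard_univ]

end Intersections

section IntersectionTypes

/-- The first of the two ways in which a pencil `𝒦` can meet a Baer subplane `B` tangent to the line
at infinity at `T`: in an `F`-conic through `T`. -/
def MeetsInConic (F : Type) [Field F] [Algebra F K] (B : Set (PP K 3)) (T : PP K 3)
    (𝒦 : Set (PP K 3)) : Prop :=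
  ∃ C : Set (PP K 3), IsFqConic F C ∧ C ⊆ B ∧ T ∈ C ∧ 𝒦 ∩ B = C

/-- The second of the two ways in which a pencil `𝒦` with vertex `P` can meet a Baer subplane `B`
tangent to the line at infinity at `T`: in the line `mP` of `B` on `P` and a line of `B` on `T`. -/
def MeetsInLines (q : ℕ) (B : Set (PP K 3)) (T P : PP K 3) (𝒦 : Set (PP K 3)) : Prop :=
  ∃ mP ℓP m : Set (PP K 3), IsLineOfExt q B mP ℓP ∧ P ∈ ℓP ∧
    IsLineOf q B m ∧ T ∈ m ∧ 𝒦 ∩ B = mP ∪ m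

variable {F : Type} [Field F] [Algebra F K] {σ : K ≃ₐ[F] K} {N : Matrix (Fin 3) (Fin 3) K}
  {P T : PP K 3} {A : Set K}

lemma mem_baerPoints_prod (hT : HasCoords N T ![1, 0, 0]) (S : Submodule F K) :
    T ∈ baerPoints N σ (Submodule.prod ⊤ S) :=
  ⟨(1, 0), ⟨Submodule.mem_top, zero_mem S⟩, by simpa [baerMap_apply] using hT⟩

lemma notMem_baerPoints_ker_fst (hT : HasCoords N T ![1, 0, 0]) :
    T ∉ baerPoints N σ (LinearMap.fst F F K).ker := by
  rintro ⟨⟨f, w⟩, hf : f = 0, hw⟩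
  obtain ⟨c, -, h⟩ := hT.exists_eq_smul hw
  simpa [baerMap_apply, hf] using congrFun h 0

lemma div_mem_of_inter_baerPoints_eq (hN : IsUnit N.det) {S : Set (PP K 3)}
    (hS : linePencil N A ∩ baerPoints N σ ⊤ = S) {U : Submodule F (F × K)}
    (hU : baerPoints N σ U ⊆ S) {u : F × K} (hu : u ∈ U) (hu0 : u.2 ≠ 0) :
    algebraMap F K u.1 / u.2 ∈ A := by
  obtain ⟨p, hp⟩ := exists_hasCoords hN (v := baerMap σ u) fun h ↦ hu0 (congrFun h 1)
  exact ((mem_linePencil_iff hp).1 (hS.ge (hU ⟨u, hu, hp⟩)).1).resolve_left hu0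

lemma inter_baerPoints_eq_union_iff (hN : IsUnit N.det) (hA : IsAffineLine F A) {a : K}
    (ha : a ≠ 0) :
    linePencil N A ∩ baerPoints N σ ⊤ = baerPoints N σ (LinearMap.fst F F K).ker ∪
        baerPoints N σ (Submodule.prod ⊤ (F ∙ a)) ↔ A = F ∙ a⁻¹ := by
  constructor
  · intro h
    have h0 : (0 : K) ∈ A := by
      simpa using div_mem_of_inter_baerPoints_eq hN h Set.subset_union_left (u := (0, 1))
        (by simp) one_ne_zero
    have ha' : a⁻¹ ∈ A := by
      simpa using div_mem_of_inter_baerPoints_eq hN h Set.subset_union_right (u := (1, a))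
        ⟨Submodule.mem_top, Submodule.mem_span_singleton_self a⟩ ha
    exact hA.eq_span_singleton h0 ha' (inv_ne_zero ha)
  · rintro rfl
    rw [linePencil_inter_baerPoints_eq_union, inv_inv]

lemma exists_vertex_line_union_iff [Finite F] (hFK : Module.finrank F K = 2)
    (hfix : ∀ x, σ x = x → x ∈ Set.range (algebraMap F K)) (hN : IsUnit N.det)
    (hP : HasCoords N P ![0, 0, 1]) (hA : IsAffineLine F A) {a : K} (ha : a ≠ 0) :
    (∃ mP ℓP, IsLineOfExt (Nat.card F) (baerPoints N σ ⊤) mP ℓP ∧ P ∈ ℓP ∧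
      linePencil N A ∩ baerPoints N σ ⊤ = mP ∪ baerPoints N σ (Submodule.prod ⊤ (F ∙ a))) ↔
        A = F ∙ a⁻¹ := by
  rw [← inter_baerPoints_eq_union_iff (σ := σ) hN hA ha]
  constructor
  · rintro ⟨mP, ℓP, hmP, hPℓ, h⟩
    rwa [hmP.eq_baerPoints_of_vertex_mem hN hP hPℓ] at h
  · intro h
    obtain ⟨ℓP, hℓP, hPℓ⟩ := exists_isLineOfExt_vertex_mem hFK hfix hN hP
    exact ⟨_, ℓP, hℓP, hPℓ, h⟩

lemma meetsInLines_iff [Finite F] (hFK : Module.finrank F K = 2)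
    (hfix : ∀ x, σ x = x → x ∈ Set.range (algebraMap F K)) (hN : IsUnit N.det)
    (hP : HasCoords N P ![0, 0, 1]) (hT : HasCoords N T ![1, 0, 0]) (hA : IsAffineLine F A) :
    MeetsInLines (Nat.card F) (baerPoints N σ ⊤) T P (linePencil N A) ↔ 0 ∈ A := by
  constructor
  · rintro ⟨mP, ℓP, m, hmP, hPℓ, hm, hTm, h⟩
    obtain ⟨a, ha, rfl⟩ := hm.exists_eq_baerPoints_of_mem_linf hFK hfix hN hT hTm
    rw [(exists_vertex_line_union_iff hFK hfix hN hP hA ha).1 ⟨mP, ℓP, hmP, hPℓ, h⟩]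
    exact zero_mem (F ∙ a⁻¹)
  · intro h0
    obtain ⟨a, ha, rfl⟩ := hA.exists_eq_span_singleton h0
    obtain ⟨mP, ℓP, hmP, hPℓ, h⟩ := (exists_vertex_line_union_iff hFK hfix hN hP hA
      (inv_ne_zero ha)).2 (by rw [inv_inv])
    exact ⟨mP, ℓP, _, hmP, hPℓ,
      isLineOf_baerPoints_prod_span_singleton hFK hfix hN (inv_ne_zero ha),
      mem_baerPoints_prod hT _, h⟩

lemma not_meetsInConic_of_zero_mem [Finite F] (hFK : Module.finrank F K = 2)
    (hfix : ∀ x, σ x = x → x ∈ Set.range (algebraMap F K)) (hN : IsUnit N.det)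
    (hP : HasCoords N P ![0, 0, 1]) (hT : HasCoords N T ![1, 0, 0]) (hA : IsAffineLine F A)
    (h0 : 0 ∈ A) : ¬ MeetsInConic F (baerPoints N σ ⊤) T (linePencil N A) := by
  rintro ⟨C, hC, -, hTC, h⟩
  obtain ⟨a, -, rfl⟩ := hA.exists_eq_span_singleton h0
  obtain ⟨-, ⟨-, -, hcard⟩, -⟩ := exists_isLineOfExt_vertex_mem (σ := σ) hFK hfix hN hP
  have hsub : insert T (baerPoints N σ (LinearMap.fst F F K).ker) ⊆ C :=
    Set.insert_subset hTC (by simp [← h, linePencil_inter_baerPoints_eq_union])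
  have hle := (Set.encard_le_encard hsub).trans hC.encard_le
  rw [Set.encard_insert_of_notMem (notMem_baerPoints_ker_fst hT),
    ← (Set.finite_of_ncard_ne_zero (by omega)).cast_ncard_eq, hcard,
    ENat.card_eq_coe_natCard] at hle
  norm_cast at hle
  omega

lemma meetsInConic_of_zero_notMem (hσ : Function.Involutive σ)
    (hfix : ∀ x, σ x = x → x ∈ Set.range (algebraMap F K)) (hN : IsUnit N.det)
    (hT : HasCoords N T ![1, 0, 0]) (hA : IsAffineLine F A) (h0 : 0 ∉ A) :
    MeetsInConic F (baerPoints N σ ⊤) T (linePencil N A) := by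
  obtain ⟨a, b, ha, rfl⟩ := hA
  have hb : b ∉ F ∙ a := by
    intro hb
    obtain ⟨r, rfl⟩ := Submodule.mem_span_singleton.1 hb
    exact h0 ⟨-r, by simp⟩
  refine ⟨_, ⟨_, ?_, linePencil_inter_baerPoints_eq_mimg hσ hfix hN ha hb⟩, Set.inter_subset_right,
    ⟨(mem_linePencil_iff hT).2 (.inl rfl), ?_⟩, rfl⟩
  · rw [det_mul]
    exact (isUnit_nonsing_inv_det_iff.2 hN).mul (isUnit_det_conicMatrix hfix ha hb)
  · exact ⟨(1, 0), Submodule.mem_top, by simpa [baerMap_apply] using hT⟩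

lemma meetsInConic_iff [Finite F] (hFK : Module.finrank F K = 2) (hσ : Function.Involutive σ)
    (hfix : ∀ x, σ x = x → x ∈ Set.range (algebraMap F K)) (hN : IsUnit N.det)
    (hP : HasCoords N P ![0, 0, 1]) (hT : HasCoords N T ![1, 0, 0]) (hA : IsAffineLine F A) :
    MeetsInConic F (baerPoints N σ ⊤) T (linePencil N A) ↔ 0 ∉ A :=
  ⟨fun h h0 ↦ not_meetsInConic_of_zero_mem hFK hfix hN hP hT hA h0 h,
    meetsInConic_of_zero_notMem hσ hfix hN hT hA⟩

lemma ncard_setOf_isLinfBaerPencil (hN : IsLinfFrame N) (hP : HasCoords N P ![0, 0, 1])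
    {Q : Set (PP K 3) → Prop} {R : Set K → Prop}
    (hQR : ∀ A, IsAffineLine F A → (Q (linePencil N A) ↔ R A)) :
    {𝒦 | IsLinfBaerPencil F 𝒦 P ∧ Q 𝒦}.ncard = {A | IsAffineLine F A ∧ R A}.ncard := by
  have himage : {𝒦 | IsLinfBaerPencil F 𝒦 P ∧ Q 𝒦} =
      linePencil N '' {A | IsAffineLine F A ∧ R A} := by
    ext 𝒦
    constructor
    · rintro ⟨h𝒦, hQ⟩
      obtain ⟨A, hA, rfl⟩ := h𝒦.exists_eq_linePencil hN hP
      exact ⟨A, ⟨hA, (hQR A hA).1 hQ⟩, rfl⟩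
    · rintro ⟨A, ⟨hA, hR⟩, rfl⟩
      exact ⟨isLinfBaerPencil_linePencil hN hP hA, (hQR A hA).2 hR⟩
  rw [himage, Set.ncard_image_of_injective _ (linePencil_injective hN.isUnit_det)]

lemma existsUnique_isLinfBaerPencil [Finite F] (hFK : Module.finrank F K = 2)
    (hfix : ∀ x, σ x = x → x ∈ Set.range (algebraMap F K)) (hN : IsLinfFrame N)
    (hP : HasCoords N P ![0, 0, 1]) (hT : HasCoords N T ![1, 0, 0]) {m : Set (PP K 3)}
    (hm : IsLineOf (Nat.card F) (baerPoints N σ ⊤) m) (hTm : T ∈ m) :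
    ∃! 𝒦, IsLinfBaerPencil F 𝒦 P ∧ ∃ mP ℓP, IsLineOfExt (Nat.card F) (baerPoints N σ ⊤) mP ℓP ∧
      P ∈ ℓP ∧ 𝒦 ∩ baerPoints N σ ⊤ = mP ∪ m := by
  obtain ⟨a, ha, rfl⟩ := hm.exists_eq_baerPoints_of_mem_linf hFK hfix hN.isUnit_det hT hTm
  have hiff {A : Set K} (hA : IsAffineLine F A) :=
    exists_vertex_line_union_iff hFK hfix hN.isUnit_det hP hA ha
  have hline : IsAffineLine F (F ∙ a⁻¹ : Set K) := isAffineLine_span_singleton (inv_ne_zero ha)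
  refine ⟨linePencil N (F ∙ a⁻¹ : Set K),
    ⟨isLinfBaerPencil_linePencil hN hP hline, (hiff hline).2 rfl⟩, ?_⟩
  rintro 𝒦 ⟨h𝒦, h⟩
  obtain ⟨A, hA, rfl⟩ := h𝒦.exists_eq_linePencil hN hP
  rw [(hiff hA).1 h]

end IntersectionTypes

/-- An `ℓ∞`-Baer pencil with vertex `P̄ ≠ T̄` meets a Baer subplane `B` tangent to `ℓ∞`
at `T̄` either in an `F_q`-conic through `T̄` or in two lines of `B`; there are `q²-1`
pencils of the first type and `q+1` of the second. -/
theorem statement_2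
    {F K : Type} [Field F] [Field K] [Fintype F] [Fintype K] [Algebra F K]
    (q : ℕ) (hq : Fintype.card F = q) (hK : Fintype.card K = q ^ 2)
    (τ : K) (t0 t1 : F)
    (hτ : τ ^ 2 = algebraMap F K t1 * τ + algebraMap F K t0)
    (hτF : τ ∉ Set.range (algebraMap F K))
    (c0 c1 : K → F)
    (hc : ∀ x : K, x = algebraMap F K (c0 x) + algebraMap F K (c1 x) * τ)
    (B : Set (PP K 3)) (hB : IsBaerSubplane F B)
    (T : PP K 3) (hT : B ∩ linf K = {T})
    (P : PP K 3) (hP : P ∈ linf K) (hPT : P ≠ T) :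
    (∀ 𝒦 : Set (PP K 3), IsLinfBaerPencil F 𝒦 P →
      (∃ C : Set (PP K 3), IsFqConic F C ∧ C ⊆ B ∧ T ∈ C ∧ 𝒦 ∩ B = C) ∨
      (∃ mP ℓP m : Set (PP K 3), IsLineOfExt q B mP ℓP ∧ P ∈ ℓP ∧
        IsLineOf q B m ∧ T ∈ m ∧ 𝒦 ∩ B = mP ∪ m)) ∧
    {𝒦 : Set (PP K 3) | IsLinfBaerPencil F 𝒦 P ∧
      ∃ C : Set (PP K 3), IsFqConic F C ∧ C ⊆ B ∧ T ∈ C ∧ 𝒦 ∩ B = C}.ncard = q ^ 2 - 1 ∧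
    {𝒦 : Set (PP K 3) | IsLinfBaerPencil F 𝒦 P ∧
      ∃ mP ℓP m : Set (PP K 3), IsLineOfExt q B mP ℓP ∧ P ∈ ℓP ∧
        IsLineOf q B m ∧ T ∈ m ∧ 𝒦 ∩ B = mP ∪ m}.ncard = q + 1 ∧
    (∀ m : Set (PP K 3), IsLineOf q B m → T ∈ m →
      ∃! 𝒦 : Set (PP K 3), IsLinfBaerPencil F 𝒦 P ∧
        ∃ mP ℓP : Set (PP K 3), IsLineOfExt q B mP ℓP ∧ P ∈ ℓP ∧ 𝒦 ∩ B = mP ∪ m) := by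
  have hFK : Module.finrank F K = 2 := finrank_eq_of_card_eq_card_pow (hq ▸ hK)
  obtain rfl : Nat.card F = q := Nat.card_eq_fintype_card.trans hq
  obtain ⟨σ, hσ, hfix⟩ := exists_conjugation hFK
  obtain ⟨N, hN, rfl, hP'⟩ :=
    exists_isLinfFrame_hasCoords hFK hσ hfix (fun h ↦ hτF (hfix τ h)) hB hT hP hPT
  obtain ⟨hTB, hTlinf⟩ := hT.ge (rfl : T = T)
  have hT' := hN.hasCoords_of_mem_baerPoints hTB hTlinf
  have hconic (A : Set K) (hA : IsAffineLine F A) :=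
    meetsInConic_iff hFK hσ hfix hN.isUnit_det hP' hT' hA
  have hlines (A : Set K) (hA : IsAffineLine F A) :=
    meetsInLines_iff hFK hfix hN.isUnit_det hP' hT' hA
  refine ⟨fun 𝒦 h𝒦 ↦ ?_, ?_, ?_, fun m ↦ existsUnique_isLinfBaerPencil hFK hfix hN hP' hT'⟩
  · obtain ⟨A, hA, rfl⟩ := h𝒦.exists_eq_linePencil hN hP'
    exact (em (0 ∈ A)).symm.imp (hconic A hA).2 (hlines A hA).2
  · exact (ncard_setOf_isLinfBaerPencil hN hP' hconic).trans (ncard_isAffineLine_zero_notMem hFK)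
  · exact (ncard_setOf_isLinfBaerPencil hN hP' hlines).trans (ncard_isAffineLine_zero_mem hFK)

end BaerConics
end
end
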